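/- arXiv:0908.1698 — 2 statements merged into one kernel-verified Lean document; each statement's English description precedes it below -/
import Mathlib

section
/- Let d ≥ 3 and let P be a Mani d-polytope with Γ(P) ≥ 2. Then d ≥ 6. -/
open scoped RealInnerProductSpace

noncomputable section

/-- We work in `ℝ^d`, modelled as Euclidean space. -/
abbrev Euc (d : ℕ) := EuclideanSpace ℝ (Fin d)

/-- `P` is a polytope: the convex hull of a finite set of points. -/
def IsPolytope {d : ℕ} (P : Set (Euc d)) : Prop :=
  ∃ V : Set (Euc d), V.Finite ∧ P = convexHull ℝ V

/-- `P` is a `d`-polytope in `ℝ^d`: a polytope whose affine span is all of `ℝ^d`. -/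
def IsDPolytope {d : ℕ} (P : Set (Euc d)) : Prop :=
  IsPolytope P ∧ affineSpan ℝ P = ⊤

/-- The vertices of a polytope are its extreme points. -/
def verts {d : ℕ} (P : Set (Euc d)) : Set (Euc d) :=
  Set.extremePoints ℝ P

/-- `[u,v]` is an inner diagonal of `P`: `u`, `v` are distinct vertices and the
relative interior of the segment (the open segment) meets the interior of `P`. -/
def InnerDiagonal {d : ℕ} (P : Set (Euc d)) (u v : Euc d) : Prop :=
  u ∈ verts P ∧ v ∈ verts P ∧ u ≠ v ∧ (openSegment ℝ u v ∩ interior P).Nonempty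

/-- `P` is illuminated: every vertex lies on an inner diagonal. -/
def Illuminated {d : ℕ} (P : Set (Euc d)) : Prop :=
  ∀ v ∈ verts P, ∃ u, InnerDiagonal P u v

/-- A set `U` of vertices illuminates itself if every `v ∈ U` lies on an inner
diagonal `[u,v]` with `u ∈ U`. -/
def IlluminatesItself {d : ℕ} (P : Set (Euc d)) (U : Set (Euc d)) : Prop :=
  ∀ v ∈ U, ∃ u ∈ U, InnerDiagonal P u v

/-- A set `W` of vertices lies opposite the vertex `v ∉ W` if `[v,w]` is an inner
diagonal for all `w ∈ W`, and the remaining vertices illuminate themselves. -/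
def LiesOpposite {d : ℕ} (P : Set (Euc d)) (W : Set (Euc d)) (v : Euc d) : Prop :=
  v ∈ verts P ∧ W ⊆ verts P ∧ v ∉ W ∧ (∀ w ∈ W, InnerDiagonal P v w) ∧
    IlluminatesItself P (verts P \ (W ∪ {v}))

/-- `Γ(P)`: the maximum cardinality of a set lying opposite some vertex (`0` if none). -/
def Gamma {d : ℕ} (P : Set (Euc d)) : ℕ :=
  sSup {n : ℕ | ∃ W v, LiesOpposite P W v ∧ W.ncard = n}

/-- `p(d) = ⌈(√(4d+1) - 1)/2⌉`. -/
def pf (d : ℕ) : ℕ := ⌈(Real.sqrt (4 * d + 1) - 1) / 2⌉₊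

/-- `M(d) = min {2d, d + p(d) + ⌈d/p(d)⌉ + 1}`. -/
def Mf (d : ℕ) : ℕ := min (2 * d) (d + pf d + ⌈(d : ℝ) / (pf d : ℝ)⌉₊ + 1)

/-- A Mani `d`-polytope: an illuminated `d`-polytope with exactly `M(d)` vertices. -/
def IsManiPolytope {d : ℕ} (P : Set (Euc d)) : Prop :=
  IsDPolytope P ∧ Illuminated P ∧ (verts P).ncard = Mf d

/-- A facet of a `d`-polytope: an exposed face of dimension `d - 1`. -/
def IsFacetOf {d : ℕ} (P F : Set (Euc d)) : Prop :=
  IsExposed ℝ P F ∧ Module.finrank ℝ (affineSpan ℝ F).direction = d - 1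

/-- `S` is the vertex set of an (exposed) face of `P`. -/
def IsFaceVertexSet {d : ℕ} (P S : Set (Euc d)) : Prop :=
  ∃ F : Set (Euc d), IsExposed ℝ P F ∧ S = verts P ∩ F

/-- Combinatorial equivalence: a bijection of the vertex sets carrying vertex sets
of faces to vertex sets of faces in both directions. -/
def CombEquiv {d : ℕ} (P Q : Set (Euc d)) : Prop :=
  ∃ f : Euc d → Euc d, Set.BijOn f (verts P) (verts Q) ∧
    ∀ S ⊆ verts P, (IsFaceVertexSet P S ↔ IsFaceVertexSet Q (f '' S))

/-- The `d`-dimensional crosspolytope `conv {±e₁, …, ±e_d}`. -/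
def crossPolytope (d : ℕ) : Set (Euc d) :=
  convexHull ℝ
    {x | ∃ i : Fin d, x = EuclideanSpace.single i 1 ∨ x = -EuclideanSpace.single i 1}

/-- `{u, v}` is the vertex set of an edge (a `1`-dimensional exposed face) of `P`. -/
def IsEdgeVertexSet {d : ℕ} (P : Set (Euc d)) (u v : Euc d) : Prop :=
  ∃ F : Set (Euc d), IsExposed ℝ P F ∧
    Module.finrank ℝ (affineSpan ℝ F).direction = 1 ∧ Set.extremePoints ℝ F = {u, v}

/-!
Join two vertices of `P` whenever they span an inner diagonal. A hyperplane supporting `P` contains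
no such edge in its intersection with `P`, and for vertices `x ≠ v` some facet through `v` misses
`x`; so every vertex `v` lies in an independent set of at least `d` vertices that avoids `x`.

As `Γ(P) ≥ 2`, the vertices can be partitioned into stars, one of which has at least two leaves. Let
there be `n + 1` stars, the largest one having `k` leaves. A facet through its center contains none
of its leaves and misses a vertex of every other star, so `n + k ≤ f₀(P) - d ≤ d`. This forces a
second star with at least two leaves. If the facet is chosen to miss one of these, it misses two
vertices of that star, whence `n + k < f₀(P) - d ≤ d`. Now `f₀(P) ≤ (n + 1) (k + 1)` gives
`d ≤ n k`, and `4 n k ≤ (n + k)²` leaves only `d ≥ 6`.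
-/

section StarPartition

open Finset

variable {α : Type*} {G : SimpleGraph α} {c x y : α} {S T U V : Finset α}

/-- `S` carries a star of `G` with center `c` and at least one leaf: `c` is adjacent to all other
elements of `S`. Leaves may be adjacent to each other. -/
structure IsStarAt (G : SimpleGraph α) (c : α) (S : Finset α) : Prop where
  center_mem : c ∈ S
  nontrivial : S.Nontrivial
  adj : ∀ w ∈ S, w ≠ c → G.Adj c w

namespace IsStarAt

variable [DecidableEq α]

protected lemma insert (hS : IsStarAt G c S) (hx : G.Adj c x) : IsStarAt G c (insert x S) where
  center_mem := mem_insert_of_mem hS.center_mem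
  nontrivial := hS.nontrivial.mono (subset_insert x S)
  adj w hw hwc := by
    obtain rfl | hw := mem_insert.mp hw
    exacts [hx, hS.adj w hw hwc]

lemma pair (hx : G.Adj c x) : IsStarAt G c {c, x} where
  center_mem := mem_insert_self c {x}
  nontrivial := ⟨c, by simp, x, by simp, hx.ne⟩
  adj w hw hwc := by
    obtain rfl | hw := mem_insert.mp hw
    exacts [absurd rfl hwc, mem_singleton.mp hw ▸ hx]

lemma or_erase (hS : IsStarAt G c S) (hy : y ∈ S) : IsStarAt G y S ∨ IsStarAt G c (S.erase y) := by
  obtain rfl | hyc := eq_or_ne y c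
  · exact .inl hS
  have hc : c ∈ S.erase y := mem_erase.mpr ⟨hyc.symm, hS.center_mem⟩
  by_cases hnt : (S.erase y).Nontrivial
  · exact .inr ⟨hc, hnt, fun w hw => hS.adj w (mem_of_mem_erase hw)⟩
  · refine .inl ⟨hy, hS.nontrivial, fun w hw hwy => ?_⟩
    have hwc : w = c := by
      by_contra hne
      exact hnt ⟨w, mem_erase.mpr ⟨hwy, hw⟩, c, hc, hne⟩
    exact hwc ▸ (hS.adj y hy hyc).symm

lemma erase_subset_sdiff (hS : IsStarAt G c S) (hT : G.IsIndepSet T) (hc : c ∈ T) :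
    S.erase c ⊆ S \ T := fun w hw => by
  obtain ⟨hwc, hwS⟩ := mem_erase.mp hw
  exact mem_sdiff.mpr ⟨hwS, fun hwT => hT hc hwT hwc.symm (hS.adj w hwS hwc)⟩

lemma sdiff_nonempty (hS : IsStarAt G c S) (hT : G.IsIndepSet T) : (S \ T).Nonempty := by
  by_cases hc : c ∈ T
  · exact hS.nontrivial.erase_nonempty.mono (hS.erase_subset_sdiff hT hc)
  · exact ⟨c, mem_sdiff.mpr ⟨hS.center_mem, hc⟩⟩

lemma two_le_card_sdiff (hS : IsStarAt G c S) (h3 : 3 ≤ #S) (hT : G.IsIndepSet T)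
    (hx : x ∈ S) (hxc : x ≠ c) (hxT : x ∉ T) : 2 ≤ #(S \ T) := by
  by_cases hc : c ∈ T
  · have := card_le_card (hS.erase_subset_sdiff hT hc)
    rw [card_erase_of_mem hS.center_mem] at this
    omega
  · rw [← card_pair hxc]
    refine card_le_card (insert_subset ?_ (singleton_subset_iff.mpr ?_))
    exacts [mem_sdiff.mpr ⟨hx, hxT⟩, mem_sdiff.mpr ⟨hS.center_mem, hc⟩]

end IsStarAt

variable [DecidableEq α]

/-- Every part of the partition `𝒮` carries a star of `G`. -/
def IsStarPartition (G : SimpleGraph α) (𝒮 : Finpartition U) : Prop :=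
  ∀ S ∈ 𝒮.parts, ∃ c, IsStarAt G c S

namespace IsStarPartition

lemma exists_union {𝒮 : Finpartition U} (h𝒮 : IsStarPartition G 𝒮) (hS : IsStarAt G c S)
    (hUS : Disjoint U S) :
    ∃ 𝒮' : Finpartition (U ∪ S), IsStarPartition G 𝒮' ∧ S ∈ 𝒮'.parts := by
  refine ⟨𝒮.extend hS.nontrivial.nonempty.ne_empty hUS rfl, fun S' hS' => ?_,
    mem_insert_self S 𝒮.parts⟩
  obtain rfl | hS' := mem_insert.mp hS'
  exacts [⟨c, hS⟩, h𝒮 S' hS']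

lemma avoid_part {𝒮 : Finpartition U} (h𝒮 : IsStarPartition G 𝒮) (hS : S ∈ 𝒮.parts) :
    IsStarPartition G (𝒮.avoid S) := by
  intro R hR
  obtain ⟨R, hR𝒮, hRS, rfl⟩ := (Finpartition.mem_avoid 𝒮).mp hR
  have hdisj : Disjoint R S := 𝒮.disjoint hR𝒮 hS fun h => hRS h.le
  rw [sdiff_eq_self_of_disjoint hdisj]
  exact h𝒮 R hR𝒮

/-- If the neighbour `y` of `x` is not a center of its star, then that star survives the removal of
`y`, and `{y, x}` becomes a new star. -/
lemma exists_insert {𝒮 : Finpartition U} (h𝒮 : IsStarPartition G 𝒮) (hx : x ∉ U) (hy : y ∈ U)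
    (hyx : G.Adj y x) : ∃ 𝒮' : Finpartition (insert x U), IsStarPartition G 𝒮' := by
  obtain ⟨S, hS, hyS⟩ := 𝒮.exists_mem hy
  obtain ⟨c, hc⟩ := h𝒮 S hS
  have hSU : S ⊆ U := 𝒮.subset hS
  have hrest := h𝒮.avoid_part hS
  obtain hy | hc := hc.or_erase hyS
  · obtain ⟨𝒮', h𝒮', -⟩ := hrest.exists_union (hy.insert hyx)
      (by grind [Finset.disjoint_left])
    exact (by grind : U \ S ∪ insert x S = insert x U) ▸ ⟨𝒮', h𝒮'⟩
  · obtain ⟨𝒮₁, h𝒮₁, -⟩ := hrest.exists_union hc (by grind [Finset.disjoint_left])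
    obtain ⟨𝒮₂, h𝒮₂, -⟩ := h𝒮₁.exists_union (.pair hyx)
      (by grind [Finset.disjoint_left])
    exact (by grind : U \ S ∪ S.erase y ∪ {y, x} = insert x U) ▸ ⟨𝒮₂, h𝒮₂⟩

end IsStarPartition

lemma exists_isStarPartition (hU : ∀ x ∈ U, ∃ y ∈ U, G.Adj y x) :
    ∃ 𝒮 : Finpartition U, IsStarPartition G 𝒮 := by
  classical
  obtain ⟨W, hW⟩ := exists_maximal
    (s := {W ∈ U.powerset | ∃ 𝒮 : Finpartition W, IsStarPartition G 𝒮})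
    ⟨∅, by simpa using ⟨Finpartition.empty (Finset α), by simp [IsStarPartition]⟩⟩
  obtain ⟨hWU, 𝒮, h𝒮⟩ : W ⊆ U ∧ ∃ 𝒮 : Finpartition W, IsStarPartition G 𝒮 := by
    simpa using hW.prop
  obtain rfl | hne := eq_or_ne W U
  · exact ⟨𝒮, h𝒮⟩
  obtain ⟨x, hxU, hxW⟩ := exists_of_ssubset (hWU.ssubset_of_ne hne)
  obtain ⟨y, hyU, hyx⟩ := hU x hxU
  obtain ⟨W', hWW', hW'U, hxW', h𝒮'⟩ : ∃ W', W ⊆ W' ∧ W' ⊆ U ∧ x ∈ W' ∧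
      ∃ 𝒮' : Finpartition W', IsStarPartition G 𝒮' := by
    by_cases hyW : y ∈ W
    · exact ⟨insert x W, by grind, by grind, by grind, h𝒮.exists_insert hxW hyW hyx⟩
    · obtain ⟨𝒮', h𝒮', -⟩ := h𝒮.exists_union (.pair hyx)
        (by grind [Finset.disjoint_left])
      exact ⟨W ∪ {y, x}, by grind, by grind, by grind, 𝒮', h𝒮'⟩
  exact absurd (hW.le_of_ge (by simpa using ⟨hW'U, h𝒮'⟩) hWW' hxW') hxW

lemma sum_card_sdiff_parts (𝒮 : Finpartition V) (T : Finset α) :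
    ∑ S ∈ 𝒮.parts, #(S \ T) = #(V \ T) := by
  rw [← (𝒮.restrict (sdiff_subset (t := T))).sum_card_parts, 𝒮.sum_restrict _ card card_empty]
  refine sum_congr rfl fun S hS => ?_
  rw [inf_eq_inter, ← inter_sdiff_assoc, inter_eq_left.mpr (𝒮.subset hS)]

lemma IsStarAt.sum_erase_card_sdiff_add_card_le {𝒮 : Finpartition V} (hc : IsStarAt G c S)
    (hS : S ∈ 𝒮.parts) (hT : G.IsIndepSet T) (hcT : c ∈ T) :
    ∑ R ∈ 𝒮.parts.erase S, #(R \ T) + #S ≤ #(V \ T) + 1 := by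
  rw [← sum_card_sdiff_parts 𝒮, ← sum_erase_add _ _ hS, ← card_erase_add_one hc.center_mem]
  have := card_le_card (hc.erase_subset_sdiff hT hcT)
  omega

namespace IsStarPartition

variable {𝒮 : Finpartition V} {S₁ S₂ : Finset α}

lemma card_parts_add_card_le (h𝒮 : IsStarPartition G 𝒮) (hS₁ : S₁ ∈ 𝒮.parts)
    (hc : IsStarAt G c S₁) (hT : G.IsIndepSet T) (hcT : c ∈ T) :
    #𝒮.parts + #S₁ ≤ #(V \ T) + 2 := by
  have hsum := hc.sum_erase_card_sdiff_add_card_le hS₁ hT hcT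
  have hone : #(𝒮.parts.erase S₁) ≤ ∑ S ∈ 𝒮.parts.erase S₁, #(S \ T) := by
    rw [card_eq_sum_ones]
    refine sum_le_sum fun S hS => ?_
    obtain ⟨b, hb⟩ := h𝒮 S (mem_of_mem_erase hS)
    exact (hb.sdiff_nonempty hT).card_pos
  have := card_erase_add_one hS₁
  omega

lemma card_parts_add_card_lt (h𝒮 : IsStarPartition G 𝒮) (hS₁ : S₁ ∈ 𝒮.parts)
    (hc : IsStarAt G c S₁) (hT : G.IsIndepSet T) (hcT : c ∈ T) (hS₂ : S₂ ∈ 𝒮.parts)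
    (hne : S₂ ≠ S₁) (h2 : 2 ≤ #(S₂ \ T)) : #𝒮.parts + #S₁ < #(V \ T) + 2 := by
  have hsum := hc.sum_erase_card_sdiff_add_card_le hS₁ hT hcT
  have hone : #(𝒮.parts.erase S₁) < ∑ S ∈ 𝒮.parts.erase S₁, #(S \ T) := by
    rw [card_eq_sum_ones]
    refine sum_lt_sum (fun S hS => ?_) ⟨S₂, mem_erase.mpr ⟨hne, hS₂⟩, h2⟩
    obtain ⟨b, hb⟩ := h𝒮 S (mem_of_mem_erase hS)
    exact (hb.sdiff_nonempty hT).card_pos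
  have := card_erase_add_one hS₁
  omega

/-- Otherwise all other stars are edges, so `2 * #𝒮.parts + #S₁ = #V + 2`, which contradicts
`card_parts_add_card_le`. -/
lemma exists_ne_three_le_card (h𝒮 : IsStarPartition G 𝒮) (hS₁ : S₁ ∈ 𝒮.parts)
    (h3 : 3 ≤ #S₁) (hc : IsStarAt G c S₁) (hTV : T ⊆ V) (hT : G.IsIndepSet T) (hcT : c ∈ T)
    (hVT : #V ≤ 2 * #T) : ∃ S₂ ∈ 𝒮.parts, S₂ ≠ S₁ ∧ 3 ≤ #S₂ := by
  by_contra! hcon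
  have hle := h𝒮.card_parts_add_card_le hS₁ hc hT hcT
  have hrest : ∑ S ∈ 𝒮.parts.erase S₁, #S ≤ #(𝒮.parts.erase S₁) * 2 :=
    sum_le_card_nsmul _ _ 2 fun S hS =>
      Nat.le_of_lt_succ (hcon S (mem_of_mem_erase hS) (ne_of_mem_erase hS))
  have hsum := 𝒮.sum_card_parts
  rw [← sum_erase_add _ _ hS₁] at hsum
  have := card_erase_add_one hS₁
  rw [card_sdiff_of_subset hTV] at hle
  omega

end IsStarPartition

lemma six_le_of_add_lt_of_le_mul {d k n : ℕ} (hadd : n + k < d) (hmul : d ≤ n * k) : 6 ≤ d := by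
  by_contra! hd
  have hsum : n + k ≤ 4 := by omega
  have amgm : 4 * (n * k) ≤ (n + k) * (n + k) := by nlinarith [sq_nonneg ((n : ℤ) - k)]
  have : (n + k) * (n + k) ≤ 4 * (n + k) := Nat.mul_le_mul_right _ hsum
  omega

lemma IsStarPartition.six_le {𝒮 : Finpartition V} {d : ℕ} (h𝒮 : IsStarPartition G 𝒮)
    (hbig : ∃ S ∈ 𝒮.parts, 3 ≤ #S) (hV : #V ≤ 2 * d)
    (hindep : ∀ v ∈ V, ∀ x ∈ V, x ≠ v →
      ∃ T ⊆ V, v ∈ T ∧ x ∉ T ∧ d ≤ #T ∧ G.IsIndepSet T) : 6 ≤ d := by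
  obtain ⟨S₀, hS₀, h3⟩ := hbig
  obtain ⟨S₁, hS₁, hmax⟩ := exists_max_image 𝒮.parts card ⟨S₀, hS₀⟩
  obtain ⟨c₁, hc₁⟩ := h𝒮 S₁ hS₁
  have hc₁V : c₁ ∈ V := 𝒮.subset hS₁ hc₁.center_mem
  obtain ⟨S₂, hS₂, hne, h3₂⟩ : ∃ S₂ ∈ 𝒮.parts, S₂ ≠ S₁ ∧ 3 ≤ #S₂ := by
    obtain ⟨x, hxS₁, hxc₁⟩ := hc₁.nontrivial.exists_ne c₁
    obtain ⟨T, hTV, hc₁T, -, hdT, hT⟩ := hindep c₁ hc₁V x (𝒮.subset hS₁ hxS₁) hxc₁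
    exact h𝒮.exists_ne_three_le_card hS₁ (h3.trans (hmax S₀ hS₀)) hc₁ hTV hT hc₁T (by omega)
  obtain ⟨c₂, hc₂⟩ := h𝒮 S₂ hS₂
  obtain ⟨x, hxS₂, hxc₂⟩ := hc₂.nontrivial.exists_ne c₂
  have hxc₁ : x ≠ c₁ := by
    rintro rfl
    exact hne (𝒮.eq_of_mem_parts hS₂ hS₁ hxS₂ hc₁.center_mem)
  obtain ⟨T, hTV, hc₁T, hxT, hdT, hT⟩ := hindep c₁ hc₁V x (𝒮.subset hS₂ hxS₂) hxc₁
  have hlt := h𝒮.card_parts_add_card_lt hS₁ hc₁ hT hc₁T hS₂ hne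
    (hc₂.two_le_card_sdiff h3₂ hT hxS₂ hxc₂ hxT)
  have hVle : #V ≤ #𝒮.parts * #S₁ := 𝒮.sum_card_parts ▸ sum_le_card_nsmul _ _ _ hmax
  rw [card_sdiff_of_subset hTV] at hlt
  -- There are `n + 1` stars, with at most `k` leaves each.
  obtain ⟨n, hn⟩ := Nat.exists_eq_succ_of_ne_zero (card_pos.mpr ⟨S₁, hS₁⟩).ne'
  obtain ⟨k, hk⟩ := Nat.exists_eq_succ_of_ne_zero (hc₁.nontrivial.nonempty.card_pos).ne'
  rw [hn, hk] at hlt hVle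
  refine six_le_of_add_lt_of_le_mul (k := k) (n := n) (by omega) ?_
  have : n.succ * k.succ = n * k + n + k + 1 := by simp only [Nat.succ_eq_add_one]; ring
  omega

end StarPartition

section Support

open Finset

section OrderedField

variable {𝕜 E ι : Type*} [Field 𝕜] [LinearOrder 𝕜] [IsStrictOrderedRing 𝕜] [AddCommGroup E]
  [Module 𝕜 E] {s : Finset ι} {a : ι → E} {f g : Module.Dual 𝕜 E} {x : E}

/-- The ratio test: `t` is the largest multiple of `g` that keeps `f + t • g` nonpositive. -/
lemma exists_add_smul_nonpos_ssubset (hf : ∀ i ∈ s, f (a i) ≤ 0)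
    (hg : ∀ i ∈ s, f (a i) = 0 → g (a i) = 0) (hpos : ∃ i ∈ s, 0 < g (a i)) :
    ∃ t : 𝕜, (∀ i ∈ s, (f + t • g) (a i) ≤ 0) ∧
      {i ∈ s | f (a i) = 0} ⊂ {i ∈ s | (f + t • g) (a i) = 0} := by
  obtain ⟨i₀, hi₀, hgi₀⟩ := hpos
  obtain ⟨j, hj, hmin⟩ := exists_min_image {i ∈ s | 0 < g (a i)} (fun i => -f (a i) / g (a i))
    ⟨i₀, mem_filter.mpr ⟨hi₀, hgi₀⟩⟩
  obtain ⟨hjs, hgj⟩ := mem_filter.mp hj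
  set t := -f (a j) / g (a j) with ht
  have ht₀ : 0 ≤ t := div_nonneg (neg_nonneg.mpr (hf j hjs)) hgj.le
  simp only [LinearMap.add_apply, LinearMap.smul_apply, smul_eq_mul]
  refine ⟨t, fun i hi => ?_, ?_⟩
  · obtain hgi | hgi := lt_or_ge 0 (g (a i))
    · have := (le_div_iff₀ hgi).mp (hmin i (mem_filter.mpr ⟨hi, hgi⟩))
      linarith
    · linarith [hf i hi, mul_nonpos_of_nonneg_of_nonpos ht₀ hgi]
  · refine (ssubset_iff_of_subset fun i hi => ?_).mpr ⟨j, ?_, fun hj' => ?_⟩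
    · obtain ⟨his, hfi⟩ := mem_filter.mp hi
      exact mem_filter.mpr ⟨his, by rw [hfi, hg i his hfi, mul_zero, add_zero]⟩
    · exact mem_filter.mpr ⟨hjs, by rw [ht, div_mul_cancel₀ _ hgj.ne', add_neg_cancel]⟩
    · exact hgj.ne' (hg j hjs (mem_filter.mp hj').2)

lemma exists_dual_apply_pos_of_span_lt_top {B : Set E} (hB : Submodule.span 𝕜 B < ⊤)
    (hs : Submodule.span 𝕜 (a '' s) = ⊤) :
    ∃ g : Module.Dual 𝕜 E, (∀ b ∈ B, g b = 0) ∧ ∃ i ∈ s, 0 < g (a i) := by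
  obtain ⟨g, hg₀, hgB⟩ := Submodule.exists_le_ker_of_lt_top _ hB
  have hgB : ∀ b ∈ B, g b = 0 := fun b hb => hgB (Submodule.subset_span hb)
  obtain ⟨i, hi, hgi⟩ : ∃ i ∈ s, g (a i) ≠ 0 := by
    by_contra! hcon
    exact hg₀ (LinearMap.ext_on hs (Set.forall_mem_image.mpr hcon))
  obtain hneg | hpos := hgi.lt_or_gt
  · exact ⟨-g, fun b hb => by simp [hgB b hb], i, hi, by simpa using hneg⟩
  · exact ⟨g, hgB, i, hi, hpos⟩

/-- A functional `f'` with a maximal set of zeros works: were the span proper, a functional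
vanishing on it could be added to `f'`, leaving `f' x` unchanged but creating a new zero. -/
lemma exists_nonpos_span_insert_eq_top (hs : Submodule.span 𝕜 (a '' s) = ⊤)
    (hf : ∀ i ∈ s, f (a i) ≤ 0) (hfx : f x < 0) :
    ∃ f' : Module.Dual 𝕜 E, (∀ i ∈ s, f' (a i) ≤ 0) ∧ f' x < 0 ∧
      Submodule.span 𝕜 (insert x (a '' {i ∈ s | f' (a i) = 0})) = ⊤ := by
  let zeros (f : Module.Dual 𝕜 E) : Finset ι := {i ∈ s | f (a i) = 0}
  let 𝓕 : Set (Module.Dual 𝕜 E) := {f | (∀ i ∈ s, f (a i) ≤ 0) ∧ f x < 0}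
  have hfin : (zeros '' 𝓕).Finite := s.powerset.finite_toSet.subset <|
    Set.image_subset_iff.mpr fun f _ => mem_powerset.mpr (filter_subset _ s)
  obtain ⟨f', ⟨hf', hf'x⟩, hmax⟩ := hfin.exists_maximalFor' zeros 𝓕 ⟨f, hf, hfx⟩
  refine ⟨f', hf', hf'x, ?_⟩
  by_contra hne
  obtain ⟨g, hg, hpos⟩ := exists_dual_apply_pos_of_span_lt_top (lt_top_iff_ne_top.mpr hne) hs
  have hgx : g x = 0 := hg x (Set.mem_insert x _)
  obtain ⟨t, ht, hlt⟩ := exists_add_smul_nonpos_ssubset hf'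
    (fun i hi hfi => hg _ (.inr ⟨i, ⟨hi, hfi⟩, rfl⟩)) hpos
  exact hlt.not_subset (hmax ⟨ht, by simpa [hgx] using hf'x⟩ hlt.subset)

end OrderedField

lemma finrank_le_card_of_span_insert_sub_eq_top {𝕜 E : Type*} [DivisionRing 𝕜] [AddCommGroup E]
    [Module 𝕜 E] {T : Finset E} {v x : E} (hv : v ∈ T)
    (hspan : Submodule.span 𝕜 (insert x ((· - v) '' (T : Set E))) = ⊤) :
    Module.finrank 𝕜 E ≤ #T := by
  classical
  let B : Finset E := insert x ((T.erase v).image (· - v))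
  have hB : Submodule.span 𝕜 (B : Set E) = ⊤ := by
    have hT : (· - v) '' (T : Set E) = insert 0 ((· - v) '' (T.erase v : Set E)) := by
      rw [← insert_erase hv, coe_insert, Set.image_insert_eq, sub_self, erase_insert_eq_erase]
      simp
    rw [hT, Set.insert_comm, Submodule.span_insert_zero] at hspan
    simpa [B] using hspan
  calc Module.finrank 𝕜 E = (B : Set E).finrank 𝕜 := by rw [Set.finrank, hB, finrank_top]
    _ ≤ #B := finrank_span_finset_le_card B
    _ ≤ #((T.erase v).image (· - v)) + 1 := card_insert_le _ _
    _ ≤ #(T.erase v) + 1 := Nat.succ_le_succ card_image_le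
    _ = #T := card_erase_add_one hv

section TopologicalVectorSpace

variable {E : Type*} [AddCommGroup E] [Module ℝ E] [TopologicalSpace E] [IsTopologicalAddGroup E]
  [ContinuousSMul ℝ E]

lemma exists_dual_forall_lt_of_notMem_convexHull [LocallyConvexSpace ℝ E] [T2Space E]
    {s : Set E} {v : E} (hs : s.Finite) (hv : v ∉ convexHull ℝ s) :
    ∃ f : StrongDual ℝ E, ∀ u ∈ s, f u < f v := by
  obtain ⟨f, r, hfr, hrv⟩ := geometric_hahn_banach_closed_point (convex_convexHull ℝ s)
    (hs.isClosed_convexHull (𝕜 := ℝ)) hv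
  exact ⟨f, fun u hu => (hfr u (subset_convexHull ℝ s hu)).trans hrv⟩

/-- The vertices on a suitable facet through `v` that misses `x`. -/
lemma exists_dual_le_finrank_le_card [LocallyConvexSpace ℝ E] [T2Space E]
    {V : Finset E} {v x : E} (hspan : affineSpan ℝ (V : Set E) = ⊤) (hv : v ∈ V)
    (hext : v ∉ convexHull ℝ ((V : Set E) \ {v})) (hx : x ∈ V) (hxv : x ≠ v) :
    ∃ f : Module.Dual ℝ E, (∀ u ∈ V, f u ≤ f v) ∧ f x < f v ∧
      Module.finrank ℝ E ≤ #{u ∈ V | f u = f v} := by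
  obtain ⟨f₀, hf₀⟩ := exists_dual_forall_lt_of_notMem_convexHull (V.finite_toSet.sdiff) hext
  have hvspan : Submodule.span ℝ ((· - v) '' (V : Set E)) = ⊤ := by
    simpa [← direction_affineSpan, hspan] using
      (vectorSpan_eq_span_vsub_set_right ℝ (s := (V : Set E)) hv).symm
  have hf₀v : ∀ u ∈ V, f₀.toLinearMap (u - v) ≤ 0 := fun u hu => by
    obtain rfl | huv := eq_or_ne u v
    · simp
    · simpa using (hf₀ u ⟨hu, huv⟩).le
  obtain ⟨f, hf, hfx, htop⟩ := exists_nonpos_span_insert_eq_top hvspan hf₀v (x := x - v)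
    (by simpa using hf₀ x ⟨hx, hxv⟩)
  simp only [map_sub, sub_nonpos, sub_neg, sub_eq_zero] at hf hfx htop
  refine ⟨f, hf, hfx, finrank_le_card_of_span_insert_sub_eq_top (x := x - v)
    (mem_filter.mpr ⟨hv, rfl⟩) ?_⟩
  simpa using htop

lemma lt_of_mem_interior_of_forall_le {f : StrongDual ℝ E} {r : ℝ} {s : Set E} {y : E}
    (hf : f ≠ 0) (hs : ∀ z ∈ s, f z ≤ r) (hy : y ∈ interior s) : f y < r := by
  have := (f.isOpenMap_of_ne_zero hf).mapsTo_interior (t := Set.Iic r) hs hy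
  rwa [interior_Iic] at this

end TopologicalVectorSpace

end Support

section Polytope

variable {d : ℕ} {P : Set (Euc d)}

lemma IsPolytope.finite_verts (hP : IsPolytope P) : (verts P).Finite := by
  obtain ⟨S, hS, rfl⟩ := hP
  exact hS.subset extremePoints_convexHull_subset

lemma IsPolytope.convexHull_verts (hP : IsPolytope P) : convexHull ℝ (verts P) = P := by
  have hclosed := hP.finite_verts.isClosed_convexHull (𝕜 := ℝ)
  obtain ⟨S, hS, rfl⟩ := hP
  rw [← hclosed.closure_eq]
  exact closure_convexHull_extremePoints (hS.isCompact_convexHull (𝕜 := ℝ)) (convex_convexHull ℝ S)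

/-- The graph on the vertices of `P` whose edges are the inner diagonals; the points of `ℝ^d` that
are not vertices are isolated. -/
def innerDiagonalGraph (P : Set (Euc d)) : SimpleGraph (Euc d) where
  Adj := InnerDiagonal P
  symm := ⟨fun u v ⟨hu, hv, huv, h⟩ => ⟨hv, hu, huv.symm, openSegment_symm ℝ u v ▸ h⟩⟩
  loopless := ⟨fun _ h => h.2.2.1 rfl⟩

lemma isIndepSet_innerDiagonalGraph {f : StrongDual ℝ (Euc d)} {r : ℝ} (hf : f ≠ 0)
    (hP : ∀ y ∈ P, f y ≤ r) : (innerDiagonalGraph P).IsIndepSet {u | f u = r} := by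
  rintro u hu v hv - ⟨-, -, -, y, hy, hyP⟩
  exact (lt_of_mem_interior_of_forall_le hf hP hyP).ne
    ((convex_hyperplane f.isLinear r).openSegment_subset hu hv hy)

lemma IsDPolytope.exists_isIndepSet (hP : IsDPolytope P) {V : Finset (Euc d)}
    (hV : (V : Set (Euc d)) = verts P) {v x : Euc d} (hv : v ∈ V) (hx : x ∈ V) (hxv : x ≠ v) :
    ∃ T ⊆ V, v ∈ T ∧ x ∉ T ∧ d ≤ T.card ∧ (innerDiagonalGraph P).IsIndepSet T := by
  have hhull : convexHull ℝ (V : Set (Euc d)) = P := hV ▸ hP.1.convexHull_verts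
  have hspan : affineSpan ℝ (V : Set (Euc d)) = ⊤ := by rw [← affineSpan_convexHull, hhull, hP.2]
  have hext : v ∉ convexHull ℝ ((V : Set (Euc d)) \ {v}) := by
    have hvP : v ∈ verts P := hV ▸ Finset.mem_coe.mpr hv
    have hVP : (V : Set (Euc d)) ⊆ P := hV ▸ extremePoints_subset
    have hP : Convex ℝ P := hhull ▸ convex_convexHull ℝ _
    rw [verts, hP.mem_extremePoints_iff_mem_sdiff_convexHull_sdiff] at hvP
    exact fun h => hvP.2 (convexHull_mono (Set.sdiff_subset_sdiff_left hVP) h)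
  obtain ⟨f, hfV, hfx, hcard⟩ := exists_dual_le_finrank_le_card hspan hv hext hx hxv
  have hfP : ∀ y ∈ P, f y ≤ f v :=
    hhull ▸ convexHull_min hfV (convex_halfSpace_le f.isLinear (f v))
  have hf₀ : f.toContinuousLinearMap ≠ 0 := by
    intro h
    have hzero (y : Euc d) : f y = 0 := DFunLike.congr_fun h y
    simp [hzero] at hfx
  refine ⟨{u ∈ V | f u = f v}, Finset.filter_subset _ V, by simp [hv], by simp [hfx.ne], ?_, ?_⟩
  · simpa using hcard
  · exact (isIndepSet_innerDiagonalGraph hf₀ hfP).mono fun u hu => (Finset.mem_filter.mp hu).2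

lemma exists_liesOpposite_of_lt_Gamma {n : ℕ} (hn : n < Gamma P) :
    ∃ W v, LiesOpposite P W v ∧ n < W.ncard := by
  obtain ⟨_, ⟨W, v, hW, rfl⟩, hlt⟩ := exists_lt_of_lt_csSup' hn
  exact ⟨W, v, hW, hlt⟩

lemma LiesOpposite.exists_isStarPartition_card_eq [DecidableEq (Euc d)] {V : Finset (Euc d)}
    (hV : (V : Set (Euc d)) = verts P) {W : Set (Euc d)} {v : Euc d} (hW : LiesOpposite P W v)
    (hne : W.Nonempty) :
    ∃ 𝒮 : Finpartition V, IsStarPartition (innerDiagonalGraph P) 𝒮 ∧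
      ∃ S ∈ 𝒮.parts, S.card = W.ncard + 1 := by
  obtain ⟨hv, hWV, hvW, hdiag, hrest⟩ := hW
  lift W to Finset (Euc d) using V.finite_toSet.subset (hV ▸ hWV)
  obtain ⟨w, hw⟩ := hne
  have hstar : IsStarAt (innerDiagonalGraph P) v (insert v W) :=
    { center_mem := Finset.mem_insert_self v W
      nontrivial := ⟨v, by simp, w, Finset.mem_insert_of_mem hw, (hdiag w hw).2.2.1⟩
      adj u hu huv := hdiag u (Finset.mem_of_mem_insert_of_ne hu huv) }
  have hinsert : insert v W ⊆ V := by
    rw [← Finset.coe_subset, hV, Finset.coe_insert]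
    exact Set.insert_subset hv hWV
  have hcoe : ((V \ insert v W : Finset (Euc d)) : Set (Euc d)) = verts P \ (↑W ∪ {v}) := by
    rw [Finset.coe_sdiff, Finset.coe_insert, hV, Set.union_singleton]
  rw [← hcoe] at hrest
  obtain ⟨𝒮, h𝒮⟩ := exists_isStarPartition (G := innerDiagonalGraph P) hrest
  have hunion := h𝒮.exists_union hstar Finset.sdiff_disjoint
  rw [Finset.sdiff_union_of_subset hinsert] at hunion
  obtain ⟨𝒮', h𝒮', hmem⟩ := hunion
  exact ⟨𝒮', h𝒮', insert v W, hmem,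
    by rw [Finset.card_insert_of_notMem hvW, Set.ncard_coe_finset]⟩

theorem mani_gammaTwo_dim_general (hP : IsDPolytope P) (hcard : (verts P).ncard ≤ 2 * d)
    (hGamma : 2 ≤ Gamma P) : 6 ≤ d := by
  classical
  obtain ⟨V, hV⟩ := hP.1.finite_verts.exists_finset_coe
  obtain ⟨W, v, hW, hW2⟩ := exists_liesOpposite_of_lt_Gamma hGamma
  obtain ⟨𝒮, h𝒮, S, hS, hScard⟩ := hW.exists_isStarPartition_card_eq hV
    (Set.nonempty_of_ncard_ne_zero (by omega))
  refine h𝒮.six_le ⟨S, hS, by omega⟩ ?_ fun v hv x hx hxv => hP.exists_isIndepSet hV hv hx hxv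
  rwa [← Set.ncard_coe_finset, hV]

end Polytope

/-- A Mani `d`-polytope (`d ≥ 3`) with `Γ(P) ≥ 2` forces `d ≥ 6`. -/
theorem mani_gammaTwo_dim {d : ℕ} (hd : 3 ≤ d) (P : Set (Euc d))
    (hP : IsManiPolytope P) (hGamma : 2 ≤ Gamma P) : 6 ≤ d :=
  mani_gammaTwo_dim_general hP.1 (hP.2.2.trans_le (min_le_left _ _)) hGamma
end
end

section
/- For every d ≥ 6 there exists a nonsimplicial Mani d-polytope, i.e., an illuminated d-polytope with exactly M(d) vertices that has a facet which is not a simplex (a facet with more than d vertices). -/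
open scoped RealInnerProductSpace

noncomputable section

/-!
Take a direct sum of `p` simplices spanning `ℝ^d`; its `d + p` vertices are labelled by the points
of `p` blocks, and a facet misses exactly one vertex of each block, that is, it is the complement of
a section of the blocks. Choose `q + 1` sections, `q + 1` being the size of the largest block, which
together cover all vertices, and stack a point slightly beyond each of the corresponding facets. The
segment from such a point to a vertex missed by its facet passes through the interior, so the result
is illuminated.

Shifting one simplex, such that its centroid becomes the centroid of a facet of the sum of the other
`p - 1` simplices, creates a nonsimplicial facet, which contains the whole simplex and this facet.
The complement of a section remains a facet if it does not contain the latter facet, and stacking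
over it leaves the nonsimplicial facet untouched.

Facets are found by Gale duality: a functional with `f ≤ 1` on the vertices `y l` is recorded by its
nonnegative slacks `1 - f (y l)`, and the linear relations among the vertices only prescribe
weighted sums of these slacks over the blocks.
-/

open Filter Topology

section Convex

variable {E : Type*} [NormedAddCommGroup E] [NormedSpace ℝ E]

theorem vectorSpan_eq_top_of_forall_dual [FiniteDimensional ℝ E] {s : Set E} {x : E}
    (h : ∀ f : StrongDual ℝ E, (∀ y ∈ s, f y ≤ f x) → f = 0) : vectorSpan ℝ s = ⊤ := by
  by_contra hne
  obtain ⟨g, hg, hker⟩ := Submodule.exists_le_ker_of_lt_top _ (lt_top_iff_ne_top.2 hne)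
  have hconst : ∀ y ∈ s, ∀ z ∈ s, g y = g z := fun y hy z hz =>
    sub_eq_zero.1 ((map_sub g y z).symm.trans (hker (vsub_mem_vectorSpan ℝ hy hz)))
  have hf : ∀ c : ℝ, (∀ y ∈ s, c * g y ≤ c * g x) → c = 0 := fun c hc => by
    have := congrArg (fun f : StrongDual ℝ E => f.toLinearMap) (h (c • g.toContinuousLinearMap) hc)
    exact (smul_eq_zero.1 (this : c • g = 0)).resolve_right hg
  by_cases hle : ∃ z ∈ s, g z ≤ g x
  · obtain ⟨z, hz, hzx⟩ := hle
    exact one_ne_zero (hf 1 fun y hy => by simpa [hconst y hy z hz] using hzx)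
  · push Not at hle
    exact neg_ne_zero.2 one_ne_zero (hf (-1) fun y hy => by linarith [hle y hy])

theorem mem_interior_convexHull_of_forall_dual [FiniteDimensional ℝ E] {s : Set E} {x : E}
    (hs : s.Nonempty) (h : ∀ f : StrongDual ℝ E, (∀ y ∈ s, f y ≤ f x) → f = 0) :
    x ∈ interior (convexHull ℝ s) := by
  have hconv : Convex ℝ (convexHull ℝ s) := convex_convexHull ℝ s
  have hint : (interior (convexHull ℝ s)).Nonempty := by
    rw [interior_convexHull_nonempty_iff_affineSpan_eq_top,
      AffineSubspace.affineSpan_eq_top_iff_vectorSpan_eq_top_of_nonempty ℝ E E hs]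
    exact vectorSpan_eq_top_of_forall_dual h
  by_contra hx
  obtain ⟨f, hf⟩ := geometric_hahn_banach_open_point hconv.interior isOpen_interior hx
  have hle : closure (interior (convexHull ℝ s)) ⊆ {y | f y ≤ f x} :=
    closure_minimal (fun y hy => (hf y hy).le) (isClosed_le f.continuous continuous_const)
  rw [hconv.closure_interior_eq_closure_of_nonempty_interior hint] at hle
  obtain ⟨y, hy⟩ := hint
  simpa [h f fun _ hz => hle (subset_closure (subset_convexHull ℝ s hz))] using hf y hy

end Convex

theorem finrank_vectorSpan_add_one_of_span_eq_top {K V : Type*} [Field K] [AddCommGroup V]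
    [Module K V] [FiniteDimensional K V] {s : Set V} (hs : s.Nonempty) (f : Module.Dual K V)
    (hf : ∀ x ∈ s, f x = 1) (hspan : Submodule.span K s = ⊤) :
    Module.finrank K (vectorSpan K s) + 1 = Module.finrank K V := by
  apply le_antisymm
  · have hker : vectorSpan K s ≤ LinearMap.ker f := by
      rw [vectorSpan_def, Submodule.span_le]
      rintro _ ⟨x, hx, y, hy, rfl⟩
      simp [hf x hx, hf y hy]
    obtain ⟨x, hx⟩ := hs
    have hne : vectorSpan K s ≠ ⊤ := fun htop => by
      simpa [hf x hx] using hker (htop ▸ Submodule.mem_top : x ∈ vectorSpan K s)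
    exact Submodule.finrank_lt hne
  · have := finrank_vectorSpan_insert_le_set K s 0
    rwa [vectorSpan_eq_span_vsub_set_right K (Set.mem_insert (0 : V) s), show
      (fun x : V => x -ᵥ (0 : V)) '' insert 0 s = insert 0 s by simp,
      Submodule.span_insert_zero, hspan, finrank_top] at this

section Supports

variable {E ι : Type*} [NormedAddCommGroup E] [NormedSpace ℝ E]

/-- The hyperplane `f = 1` supports the point configuration `v` and touches exactly the points
indexed by `S`, so that `S` indexes a face of the convex hull. The right-hand side `1` puts the
origin strictly on the side of the polytope. -/
structure Supports (f : StrongDual ℝ E) (v : ι → E) (S : Set ι) : Prop where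
  le_one (i : ι) : f (v i) ≤ 1
  eq_one_iff (i : ι) : f (v i) = 1 ↔ i ∈ S

namespace Supports

variable {f : StrongDual ℝ E} {v : ι → E} {S : Set ι} {i : ι} {x : E}

theorem lt_one (h : Supports f v S) (hi : i ∉ S) : f (v i) < 1 :=
  (h.le_one i).lt_of_ne fun heq => hi ((h.eq_one_iff i).1 heq)

theorem apply_le_one (h : Supports f v S) (hx : x ∈ convexHull ℝ (Set.range v)) : f x ≤ 1 :=
  convexHull_min (t := {x | f x ≤ 1}) (Set.range_subset_iff.2 h.le_one)
    (convex_halfSpace_le f.isLinear 1) hx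

theorem mem_toExposed_iff (h : Supports f v S) (hS : S.Nonempty) :
    x ∈ f.toExposed (convexHull ℝ (Set.range v)) ↔ x ∈ convexHull ℝ (Set.range v) ∧ f x = 1 := by
  obtain ⟨i, hi⟩ := hS
  refine and_congr_right fun hx => ⟨fun hmax => (h.apply_le_one hx).antisymm ?_, fun hfx y hy => ?_⟩
  · rw [← (h.eq_one_iff i).2 hi]
    exact hmax _ (subset_convexHull ℝ _ ⟨i, rfl⟩)
  · rw [hfx]
    exact h.apply_le_one hy

theorem eq_of_apply_eq_one (h : Supports f v {i}) (hx : x ∈ convexHull ℝ (Set.range v))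
    (hfx : f x = 1) : x = v i := by
  have hsub : Set.range v ⊆ insert (v i) {y | f y < 1} := by
    rintro _ ⟨j, rfl⟩
    by_cases hj : j = i
    · exact .inl (congrArg v hj)
    · exact .inr (h.lt_one hj)
  have hconv : Convex ℝ {y | f y < 1} := convex_halfSpace_lt f.isLinear 1
  have hx' := convexHull_mono hsub hx
  rw [convexHull_insert ⟨0, by simp⟩, hconv.convexHull_eq, mem_convexJoin] at hx'
  obtain ⟨_, rfl, z, hz, a, b, -, -, hab, rfl⟩ := hx'
  have hb : b * (f z - 1) = 0 := by
    simp only [map_add, map_smul, smul_eq_mul, (h.eq_one_iff i).2 rfl] at hfx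
    linear_combination hfx - hab
  obtain rfl : b = 0 := (mul_eq_zero.1 hb).resolve_right (sub_neg.2 hz).ne
  simp_all

theorem mem_extremePoints (h : Supports f v {i}) :
    v i ∈ Set.extremePoints ℝ (convexHull ℝ (Set.range v)) := by
  refine exposedPoints_subset_extremePoints ⟨subset_convexHull ℝ _ ⟨i, rfl⟩, f, fun y hy => ?_⟩
  rw [(h.eq_one_iff i).2 rfl]
  exact ⟨h.apply_le_one hy, fun hle => h.eq_of_apply_eq_one hy ((h.apply_le_one hy).antisymm hle)⟩

end Supports

/-- Each point of the configuration is exposed as a vertex of the convex hull, and distinct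
indices give distinct vertices. -/
def InConvexPosition (v : ι → E) : Prop :=
  ∀ i, ∃ f, Supports f v {i}

theorem InConvexPosition.injective {v : ι → E} (hv : InConvexPosition v) :
    Function.Injective v := by
  intro i j hij
  obtain ⟨f, hf⟩ := hv j
  exact (hf.eq_one_iff i).1 (hij ▸ (hf.eq_one_iff j).2 rfl)

theorem InConvexPosition.extremePoints_convexHull {v : ι → E} (hv : InConvexPosition v) :
    Set.extremePoints ℝ (convexHull ℝ (Set.range v)) = Set.range v :=
  extremePoints_convexHull_subset.antisymm <| Set.range_subset_iff.2 fun i =>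
    (hv i).elim fun _ hf => hf.mem_extremePoints

/-- `S` indexes the points of the configuration on a facet. As the supporting hyperplane avoids the
origin, having dimension `dim E - 1` amounts to spanning `E` linearly. -/
def IsFacetSet (v : ι → E) (S : Set ι) : Prop :=
  (∃ f, Supports f v S) ∧ Submodule.span ℝ (v '' S) = ⊤

theorem IsFacetSet.exists_isFacetOf [Finite ι] {d : ℕ} {v : ι → Euc d} {G : Set ι}
    (hv : InConvexPosition v) (hG : IsFacetSet v G) (hne : G.Nonempty) :
    ∃ F, IsFacetOf (convexHull ℝ (Set.range v)) F ∧ G.ncard ≤ (Set.extremePoints ℝ F).ncard := by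
  obtain ⟨⟨f, hf⟩, hspan⟩ := hG
  set P := convexHull ℝ (Set.range v)
  have hexp : IsExposed ℝ P (f.toExposed P) := ContinuousLinearMap.toExposed.isExposed
  have hGF : v '' G ⊆ f.toExposed P := by
    rintro _ ⟨i, hi, rfl⟩
    exact (hf.mem_toExposed_iff hne).2 ⟨subset_convexHull ℝ _ ⟨i, rfl⟩, (hf.eq_one_iff i).2 hi⟩
  have hfin : (Set.extremePoints ℝ (f.toExposed P)).Finite := (Set.finite_range v).subset <|
    hexp.isExtreme.extremePoints_subset_extremePoints.trans hv.extremePoints_convexHull.subset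
  refine ⟨f.toExposed P, ⟨hexp, ?_⟩, ?_⟩
  · have hdim := finrank_vectorSpan_add_one_of_span_eq_top ((hne.image v).mono hGF) f.toLinearMap
      (fun x hx => ((hf.mem_toExposed_iff hne).1 hx).2)
      (top_unique (hspan ▸ Submodule.span_mono hGF))
    rw [finrank_euclideanSpace_fin] at hdim
    rw [direction_affineSpan]
    exact Nat.eq_sub_of_add_eq hdim
  · rw [← Set.ncard_image_of_injective G hv.injective]
    refine Set.ncard_le_ncard (fun x hx => ?_) hfin
    refine inter_extremePoints_subset_extremePoints_of_subset hexp.subset ⟨hGF hx, ?_⟩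
    rw [hv.extremePoints_convexHull]
    exact Set.image_subset_range v G hx

end Supports

section Centroid

variable {E F ι : Type*} [AddCommGroup E] [Module ℝ E] [FunLike F E ℝ] [LinearMapClass F ℝ E ℝ]
  {S : Finset ι} {y : ι → E} {M : ℝ}

theorem card_mul_apply_centroid (hS : S.Nonempty) (f : F) :
    S.card * f (S.centroid ℝ y) = ∑ i ∈ S, f (y i) := by
  have hcard : (S.card : ℝ) ≠ 0 := Nat.cast_ne_zero.2 hS.card_pos.ne'
  rw [S.centroid_eq_centerMass hS,
    S.centerMass_eq_of_sum_1 y (S.sum_centroidWeights_eq_one_of_nonempty ℝ hS)]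
  simp [← Finset.smul_sum, hcard]

theorem apply_centroid_eq (hS : S.Nonempty) (f : F) (hM : ∀ i ∈ S, f (y i) = M) :
    f (S.centroid ℝ y) = M := by
  have hcard : (S.card : ℝ) ≠ 0 := Nat.cast_ne_zero.2 hS.card_pos.ne'
  refine mul_left_cancel₀ hcard ?_
  rw [card_mul_apply_centroid hS, Finset.sum_congr rfl hM, Finset.sum_const, nsmul_eq_mul]

theorem apply_centroid_lt (f : F) (hle : ∀ i ∈ S, f (y i) ≤ M)
    (hlt : ∃ i ∈ S, f (y i) < M) : f (S.centroid ℝ y) < M := by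
  have hS : S.Nonempty := hlt.imp fun _ => And.left
  refine lt_of_mul_lt_mul_left ?_ (Nat.cast_nonneg S.card)
  rw [card_mul_apply_centroid hS, ← nsmul_eq_mul, ← Finset.sum_const]
  exact Finset.sum_lt_sum hle hlt

theorem apply_centroid_le (hS : S.Nonempty) (f : F) (hle : ∀ i ∈ S, f (y i) ≤ M) :
    f (S.centroid ℝ y) ≤ M := by
  by_cases hlt : ∃ i ∈ S, f (y i) < M
  · exact (apply_centroid_lt f hle hlt).le
  · push Not at hlt
    exact (apply_centroid_eq hS f fun i hi => (hle i hi).antisymm (hlt i hi)).le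

end Centroid

section Stacking

variable {E ι J : Type*} [NormedAddCommGroup E] [NormedSpace ℝ E]
  {y : ι → E} {S : J → Finset ι} {G T : Set ι} {f : StrongDual ℝ E}

/-- Stacking adds to the points `y` one further point for each `j`, the centroid of the points
indexed by `S j` dilated by the factor `r`. If `S j` indexes a facet and the origin is interior,
then this point lies just beyond the facet when `r` is slightly larger than `1`. -/
def stack (y : ι → E) (S : J → Finset ι) (r : ℝ) : ι ⊕ J → E :=
  Sum.elim y fun j => r • (S j).centroid ℝ y

theorem Supports.apply_centroid_lt_one (hT : Supports f y T) {S : Finset ι} (hS : ¬ ↑S ⊆ T) :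
    f (S.centroid ℝ y) < 1 := by
  obtain ⟨i, hi, hiT⟩ := Set.not_subset.1 hS
  exact apply_centroid_lt f (fun i _ => hT.le_one i) ⟨i, hi, hT.lt_one hiT⟩

theorem Supports.eventually_stack [Finite J] (hT : Supports f y T) (hS : ∀ j, ¬ ↑(S j) ⊆ T) :
    ∀ᶠ r in 𝓝 (1 : ℝ), Supports f (stack y S r) (Sum.inl '' T) := by
  have hlt : ∀ᶠ r in 𝓝 (1 : ℝ), ∀ j, f (r • (S j).centroid ℝ y) < 1 := by
    refine eventually_all.2 fun j => ContinuousAt.eventually_lt (by fun_prop) (by fun_prop) ?_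
    simpa using hT.apply_centroid_lt_one (hS j)
  filter_upwards [hlt] with r hr
  refine ⟨Sum.rec hT.le_one fun j => (hr j).le, Sum.rec (fun i => ?_) fun j => ?_⟩
  · simpa [stack] using hT.eq_one_iff i
  · simpa [stack] using (hr j).ne

theorem Supports.stack_inr {r : ℝ} {j : J} (hf : Supports f y (S j)) (hS : (S j).Nonempty)
    (hsub : ∀ j' ≠ j, ¬ S j' ⊆ S j) (hr : 1 < r) :
    Supports (r⁻¹ • f) (stack y S r) {Sum.inr j} := by
  have hr₀ : 0 < r := zero_lt_one.trans hr
  have hcentroid : f ((S j).centroid ℝ y) = 1 :=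
    apply_centroid_eq hS f fun i hi => (hf.eq_one_iff i).2 hi
  have hinl (i : ι) : r⁻¹ * f (y i) < 1 :=
    (mul_le_of_le_one_right (inv_pos.2 hr₀).le (hf.le_one i)).trans_lt (inv_lt_one_of_one_lt₀ hr)
  have hinr (j' : J) (hj : j' ≠ j) : f ((S j').centroid ℝ y) < 1 :=
    hf.apply_centroid_lt_one (by exact_mod_cast hsub j' hj)
  refine ⟨Sum.rec (fun i => (hinl i).le) fun j' => ?_,
    Sum.rec (fun i => by simpa [stack] using (hinl i).ne) fun j' => ?_⟩ <;>
    obtain rfl | hj := eq_or_ne j' j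
  · simp [stack, hr₀.ne', hcentroid]
  · simpa [stack, hr₀.ne'] using (hinr j' hj).le
  · simp [stack, hr₀.ne', hcentroid]
  · simpa [stack, hr₀.ne', hj] using (hinr j' hj).ne

theorem IsFacetSet.midpoint_centroid_mem_interior [FiniteDimensional ℝ E] {S : Finset ι} {i : ι}
    (hF : IsFacetSet y S) (hS : S.Nonempty) (hi : i ∉ S) :
    midpoint ℝ (y i) (S.centroid ℝ y) ∈ interior (convexHull ℝ (Set.range y)) := by
  obtain ⟨⟨f, hf⟩, hspan⟩ := hF
  refine mem_interior_convexHull_of_forall_dual ⟨y i, i, rfl⟩ fun g hg => ?_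
  set M := g (midpoint ℝ (y i) (S.centroid ℝ y)) with hM
  have hgy (l : ι) : g (y l) ≤ M := hg _ ⟨l, rfl⟩
  have hmid : 2 * M = g (y i) + g (S.centroid ℝ y) := by
    rw [hM, midpoint_eq_smul_add, map_smul, map_add, smul_eq_mul, mul_invOf_cancel_left]
  have hgi : g (y i) = M := (hgy i).antisymm <| by
    linarith [apply_centroid_le hS g fun l _ => hgy l]
  have hgS (l : ι) (hl : l ∈ S) : g (y l) = M := by
    by_contra hne
    linarith [apply_centroid_lt g (fun l _ => hgy l) ⟨l, hl, (hgy l).lt_of_ne hne⟩]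
  have hgf : g = M • f := ContinuousLinearMap.coe_injective <| LinearMap.ext_on hspan <| by
    rintro _ ⟨l, hl, rfl⟩
    simpa [(hf.eq_one_iff l).2 hl] using hgS l hl
  have hM₀ : M = 0 := by
    have : M * f (y i) = M := by simpa [hgf] using hgi
    exact (mul_right_eq_self₀.1 this).resolve_left (hf.lt_one hi).ne
  rw [hgf, hM₀, zero_smul]

theorem IsFacetSet.eventually_midpoint_stack_mem_interior [FiniteDimensional ℝ E] {i : ι} {j : J}
    (hF : IsFacetSet y (S j)) (hS : (S j).Nonempty) (hi : i ∉ S j) :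
    ∀ᶠ r in 𝓝 (1 : ℝ), midpoint ℝ (stack y S r (Sum.inl i)) (stack y S r (Sum.inr j)) ∈
      interior (convexHull ℝ (Set.range y)) := by
  have hcont : ContinuousAt
      (fun r => midpoint ℝ (stack y S r (Sum.inl i)) (stack y S r (Sum.inr j))) 1 := by
    simp only [midpoint_eq_smul_add, stack, Sum.elim_inl, Sum.elim_inr]
    fun_prop
  refine hcont.eventually (isOpen_interior.mem_nhds ?_)
  simpa [stack] using hF.midpoint_centroid_mem_interior hS hi

/-- The facets `S j` over which points are to be stacked: none contains another one, no vertex lies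
on all of them, and none contains all vertices. -/
structure IsStackingFamily (y : ι → E) (S : J → Finset ι) : Prop where
  isFacetSet (j : J) : IsFacetSet y (S j)
  nontrivial (j : J) : (S j).Nontrivial
  not_subset (i j : J) (hij : i ≠ j) : ¬ S i ⊆ S j
  exists_facet_notMem (i : ι) : ∃ j, i ∉ S j
  exists_vertex_notMem (j : J) : ∃ i, i ∉ S j

theorem IsFacetSet.stack (hG : IsFacetSet y G) {r : ℝ}
    (hr : ∃ f, Supports f (stack y S r) (Sum.inl '' G)) :
    IsFacetSet (stack y S r) (Sum.inl '' G) :=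
  ⟨hr, by rw [← hG.2, Set.image_image]; rfl⟩

theorem IsStackingFamily.eventually_inConvexPosition_stack [Finite ι] [Finite J]
    (hS : IsStackingFamily y S) (hy : InConvexPosition y) :
    ∀ᶠ r in 𝓝[>] (1 : ℝ), InConvexPosition (stack y S r) := by
  have hinl : ∀ᶠ r in 𝓝 (1 : ℝ), ∀ i, ∃ f, Supports f (stack y S r) {Sum.inl i} := by
    refine eventually_all.2 fun i => ?_
    obtain ⟨f, hf⟩ := hy i
    refine (hf.eventually_stack fun j hj => ?_).mono fun r hr => ⟨f, by simpa using hr⟩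
    exact (hS.nontrivial j).not_subset_singleton (by exact_mod_cast hj)
  filter_upwards [hinl.filter_mono nhdsWithin_le_nhds, self_mem_nhdsWithin] with r hr hr₁
  refine Sum.rec hr fun j => ?_
  obtain ⟨f, hf⟩ := (hS.isFacetSet j).1
  exact ⟨_, hf.stack_inr (hS.nontrivial j).nonempty (fun i hi => hS.not_subset i j hi) hr₁⟩

end Stacking

section Illumination

variable {d : ℕ} {ι J : Type*} {y : ι → Euc d} {S : J → Finset ι}

theorem InnerDiagonal.symm {P : Set (Euc d)} {u v : Euc d} (h : InnerDiagonal P u v) :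
    InnerDiagonal P v u :=
  ⟨h.2.1, h.1, h.2.2.1.symm, openSegment_symm ℝ u v ▸ h.2.2.2⟩

theorem Illuminated.affineSpan_eq_top {P : Set (Euc d)} (hP : Illuminated P)
    (hne : (verts P).Nonempty) : affineSpan ℝ P = ⊤ := by
  obtain ⟨v, hv⟩ := hne
  obtain ⟨u, -, -, -, x, -, hx⟩ := hP v hv
  exact affineSpan_eq_top_of_nonempty_interior ⟨x, interior_mono (subset_convexHull ℝ P) hx⟩

theorem illuminated_stack {r : ℝ} (hr : InConvexPosition (stack y S r))
    (hι : ∀ i, ∃ j, i ∉ S j) (hJ : ∀ j, ∃ i, i ∉ S j)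
    (hmid : ∀ i j, i ∉ S j → midpoint ℝ (stack y S r (Sum.inl i)) (stack y S r (Sum.inr j)) ∈
      interior (convexHull ℝ (Set.range y))) :
    Illuminated (convexHull ℝ (Set.range (stack y S r))) := by
  have hdiag (i : ι) (j : J) (hij : i ∉ S j) : InnerDiagonal
      (convexHull ℝ (Set.range (stack y S r))) (stack y S r (.inl i)) (stack y S r (.inr j)) := by
    have hmem (k : ι ⊕ J) : stack y S r k ∈ verts (convexHull ℝ (Set.range (stack y S r))) :=
      hr.extremePoints_convexHull.superset ⟨k, rfl⟩
    refine ⟨hmem _, hmem _, hr.injective.ne Sum.inl_ne_inr, _, midpoint_mem_openSegment _ _,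
      interior_mono (convexHull_mono ?_) (hmid i j hij)⟩
    exact Set.range_subset_iff.2 fun i => ⟨Sum.inl i, rfl⟩
  intro v hv
  obtain ⟨i | j, rfl⟩ := hr.extremePoints_convexHull.subset hv
  · exact (hι i).imp' _ fun j hij => (hdiag i j hij).symm
  · exact (hJ j).imp' _ fun i hij => hdiag i j hij

theorem IsStackingFamily.exists_stack [Finite ι] [Finite J] {G : Set ι}
    (hS : IsStackingFamily y S) (hy : InConvexPosition y) (hG : IsFacetSet y G)
    (hSG : ∀ j, ¬ ↑(S j) ⊆ G) :
    ∃ v : ι ⊕ J → Euc d, InConvexPosition v ∧ IsFacetSet v (Sum.inl '' G) ∧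
      Illuminated (convexHull ℝ (Set.range v)) := by
  obtain ⟨f, hf⟩ := hG.1
  have hmid : ∀ᶠ r in 𝓝 (1 : ℝ), ∀ i j, i ∉ S j →
      midpoint ℝ (stack y S r (Sum.inl i)) (stack y S r (Sum.inr j)) ∈
        interior (convexHull ℝ (Set.range y)) :=
    eventually_all.2 fun i => eventually_all.2 fun j => eventually_imp_distrib_left.2 fun hij =>
      (hS.isFacetSet j).eventually_midpoint_stack_mem_interior (hS.nontrivial j).nonempty hij
  obtain ⟨r, hconv, hsupp, hmid⟩ := ((hS.eventually_inConvexPosition_stack hy).and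
    (((hf.eventually_stack hSG).and hmid).filter_mono nhdsWithin_le_nhds)).exists
  exact ⟨stack y S r, hconv, hG.stack ⟨f, hsupp⟩,
    illuminated_stack hconv hS.exists_facet_notMem hS.exists_vertex_notMem hmid⟩

end Illumination

section GaleDuality

variable {E W ι : Type*} [NormedAddCommGroup E] [NormedSpace ℝ E]
  [AddCommGroup W] [Module ℝ W] {y : ι → E} {L : (ι → ℝ) →ₗ[ℝ] W} {S : Set ι}

/-- Gale duality: `y` spans `E` and its linear relations are given by `L`, in the sense that the
vectors `(f (y i))ᵢ`, for `f` a functional, are exactly those in the kernel of `L`. -/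
structure IsGaleDual (y : ι → E) (L : (ι → ℝ) →ₗ[ℝ] W) : Prop where
  span_range : Submodule.span ℝ (Set.range y) = ⊤
  apply_eq_zero_iff (t : ι → ℝ) : L t = 0 ↔ ∃ f : StrongDual ℝ E, ∀ i, f (y i) = t i

theorem IsGaleDual.exists_supports (hy : IsGaleDual y L) {t : ι → ℝ} (ht : 0 ≤ t)
    (hL : L t = L 1) : ∃ f, Supports f y {i | t i = 0} := by
  obtain ⟨f, hf⟩ := (hy.apply_eq_zero_iff (1 - t)).1 (by rw [map_sub, hL, sub_self])
  refine ⟨f, fun i => ?_, fun i => ?_⟩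
  · simpa [hf] using ht i
  · simp [hf]

variable [FiniteDimensional ℝ E]

theorem span_eq_top_of_forall_dual {s : Set E}
    (h : ∀ f : StrongDual ℝ E, (∀ x ∈ s, f x = 0) → f = 0) : Submodule.span ℝ s = ⊤ := by
  by_contra hne
  obtain ⟨g, hg, hker⟩ := Submodule.exists_le_ker_of_lt_top _ (lt_top_iff_ne_top.2 hne)
  refine hg (LinearMap.toContinuousLinearMap.map_eq_zero_iff.1 (h g.toContinuousLinearMap ?_))
  exact fun x hx => hker (Submodule.subset_span hx)

theorem exists_isGaleDual [Finite ι]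
    (hL : Module.finrank ℝ (LinearMap.ker L) = Module.finrank ℝ E) :
    ∃ y : ι → E, IsGaleDual y L := by
  let Φ : Module.Dual ℝ E ≃ₗ[ℝ] LinearMap.ker L :=
    LinearEquiv.ofFinrankEq _ _ (Subspace.dual_finrank_eq.trans hL.symm)
  let y (i : ι) : E := (Module.evalEquiv ℝ E).symm
    (LinearMap.proj i ∘ₗ (LinearMap.ker L).subtype ∘ₗ Φ.toLinearMap)
  have hy (f : Module.Dual ℝ E) (i : ι) : f (y i) = (Φ f : ι → ℝ) i :=
    Module.apply_evalEquiv_symm_apply ℝ E f _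
  refine ⟨y, span_eq_top_of_forall_dual fun f hf => ?_, fun t => ⟨fun ht => ?_, ?_⟩⟩
  · have hΦ : Φ f.toLinearMap = 0 :=
      Subtype.ext <| funext fun i => (hy f.toLinearMap i).symm.trans (hf _ ⟨i, rfl⟩)
    exact ContinuousLinearMap.coe_injective (Φ.map_eq_zero_iff.1 hΦ)
  · refine ⟨(Φ.symm ⟨t, ht⟩).toContinuousLinearMap, fun i => ?_⟩
    exact (hy _ i).trans (congrArg (fun s : LinearMap.ker L => (s : ι → ℝ) i)
      (Φ.apply_symm_apply ⟨t, ht⟩))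
  · rintro ⟨f, hf⟩
    have ht : (Φ f.toLinearMap : ι → ℝ) = t :=
      funext fun i => (hy f.toLinearMap i).symm.trans (hf i)
    exact ht ▸ (Φ f.toLinearMap).2

theorem IsGaleDual.span_image_eq_top (hy : IsGaleDual y L)
    (hS : ∀ t, L t = 0 → (∀ i ∈ S, t i = 0) → t = 0) : Submodule.span ℝ (y '' S) = ⊤ := by
  refine span_eq_top_of_forall_dual fun f hf => ContinuousLinearMap.coe_injective ?_
  have ht : (fun i => f (y i)) = 0 :=
    hS _ ((hy.apply_eq_zero_iff _).2 ⟨f, fun _ => rfl⟩) fun i hi => hf _ ⟨i, hi, rfl⟩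
  refine LinearMap.ext_on_range hy.span_range fun i => ?_
  exact congrFun ht i

end GaleDuality

section BlockWeights

variable {B : Type*} {V : B → Type*} [∀ b, Fintype (V b)] {u : (Σ b, V b) → ℝ} {z w : ∀ b, V b}

/-- The block sums of the constant function `1`. The values `1 - f (y l)` of a functional `f` on the
vertices `y l` of a direct sum of simplices with centroid `0` are exactly the functions with these
block sums. -/
def HasBlockSums (u : (Σ b, V b) → ℝ) : Prop :=
  ∀ b, ∑ i, u ⟨b, i⟩ = Fintype.card (V b)

theorem HasBlockSums.le_card (hsum : HasBlockSums u) (hu : 0 ≤ u) (b : B) (i : V b) :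
    u ⟨b, i⟩ ≤ Fintype.card (V b) :=
  hsum b ▸ Finset.single_le_sum (f := fun i => u ⟨b, i⟩) (fun i _ => hu ⟨b, i⟩) (Finset.mem_univ i)

variable [∀ b, DecidableEq (V b)]

/-- The block sums of `1`, concentrated on the section `z`. -/
def sectionWeight (z : ∀ b, V b) (l : Σ b, V b) : ℝ :=
  if l.2 = z l.1 then Fintype.card (V l.1) else 0

theorem sectionWeight_nonneg (z : ∀ b, V b) : 0 ≤ sectionWeight z := fun l => by
  unfold sectionWeight
  split_ifs <;> simp

theorem sectionWeight_eq_zero_iff {l : Σ b, V b} : sectionWeight z l = 0 ↔ l.2 ≠ z l.1 := by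
  have : Nonempty (V l.1) := ⟨l.2⟩
  simp [sectionWeight]

theorem hasBlockSums_sectionWeight (z : ∀ b, V b) : HasBlockSums (sectionWeight z) := fun b => by
  simp [sectionWeight]

/-- The complement of a section: a facet of a direct sum of simplices misses exactly one vertex of
each summand. -/
def offSection [Fintype B] (z : ∀ b, V b) : Finset (Σ b, V b) := {l | l.2 ≠ z l.1}

section OffSection

variable [Fintype B]

theorem mem_offSection {l : Σ b, V b} : l ∈ offSection z ↔ l.2 ≠ z l.1 := by
  simp [offSection]

theorem offSection_subset_iff : offSection z ⊆ offSection w ↔ z = w := by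
  refine ⟨fun h => funext fun b => ?_, fun h => h ▸ subset_rfl⟩
  by_contra hne
  exact mem_offSection.1 (h (mem_offSection.2 (Ne.symm hne) : ⟨b, w b⟩ ∈ offSection z)) rfl

theorem offSection_nontrivial [Nontrivial B] [∀ b, Nontrivial (V b)] (z : ∀ b, V b) :
    (offSection z).Nontrivial := by
  obtain ⟨b, c, hbc⟩ := exists_pair_ne B
  obtain ⟨i, hi⟩ := exists_ne (z b)
  obtain ⟨k, hk⟩ := exists_ne (z c)
  exact ⟨⟨b, i⟩, mem_offSection.2 hi, ⟨c, k⟩, mem_offSection.2 hk,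
    fun h => hbc (congrArg Sigma.fst h)⟩

end OffSection

variable [DecidableEq B]

/-- The block sums of `1`, evenly distributed within each block over the indices other than `l`. -/
def vertexWeight (l l' : Σ b, V b) : ℝ :=
  if l' = l then 0 else if l'.1 = l.1 then Fintype.card (V l.1) / (Fintype.card (V l.1) - 1) else 1

theorem vertexWeight_of_fst_ne {l l' : Σ b, V b} (h : l'.1 ≠ l.1) : vertexWeight l l' = 1 := by
  have : l' ≠ l := fun h' => h (congrArg Sigma.fst h')
  simp [vertexWeight, h, this]

variable [∀ b, Nontrivial (V b)]

theorem vertexWeight_nonneg (l : Σ b, V b) : 0 ≤ vertexWeight l := fun l' => by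
  have : (1 : ℝ) < Fintype.card (V l.1) := Nat.one_lt_cast.2 Fintype.one_lt_card
  unfold vertexWeight
  split_ifs
  exacts [le_rfl, div_nonneg (by simp) (sub_nonneg.2 this.le), zero_le_one]

theorem vertexWeight_eq_zero_iff {l l' : Σ b, V b} : vertexWeight l l' = 0 ↔ l' = l := by
  have : (1 : ℝ) < Fintype.card (V l.1) := Nat.one_lt_cast.2 Fintype.one_lt_card
  unfold vertexWeight
  split_ifs with h h'
  · simpa using h
  · simp [h, sub_ne_zero.2 this.ne']
  · simp [h]

theorem hasBlockSums_vertexWeight (l : Σ b, V b) : HasBlockSums (vertexWeight l) := by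
  obtain ⟨c, i⟩ := l
  intro b
  obtain rfl | hb := eq_or_ne b c
  · have hcard : (1 : ℝ) < Fintype.card (V b) := Nat.one_lt_cast.2 Fintype.one_lt_card
    have hweight (k : V b) : vertexWeight ⟨b, i⟩ ⟨b, k⟩ =
        Fintype.card (V b) / (Fintype.card (V b) - 1) -
          if k = i then (Fintype.card (V b) : ℝ) / (Fintype.card (V b) - 1) else 0 := by
      by_cases hk : k = i <;> simp [vertexWeight, hk]
    simp only [hweight, Finset.sum_sub_distrib, Finset.sum_ite_eq', Finset.mem_univ, if_true,
      Finset.sum_const, Finset.card_univ, nsmul_eq_mul]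
    field_simp [sub_ne_zero.2 hcard.ne']
  · simp [vertexWeight_of_fst_ne (l := ⟨c, i⟩) (l' := ⟨b, _⟩) hb]

end BlockWeights

section ShiftedRelations

variable {B : Type*} [Fintype B] [DecidableEq B] {V : B → Type*} [∀ b, Fintype (V b)] {b₀ : B}
  {μ z : ∀ b, V b} {u : (Σ b, V b) → ℝ}

/-- The dimension of the direct sum of the simplices other than the one at `b₀`. -/
def restDim (V : B → Type*) [∀ b, Fintype (V b)] (b₀ : B) : ℝ :=
  ∑ b ∈ {b₀}ᶜ, (Fintype.card (V b) - 1 : ℝ)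

/-- The linear relations among the vertices `y l` of a direct sum of simplices of which all have
centroid `0`, except that the one at `b₀` has centroid `-(restDim V b₀)⁻¹ • ∑ b ≠ b₀, y ⟨b, μ b⟩`.
As `∑ i, y ⟨b, i⟩ = 0` for `b ≠ b₀`, this is also the centroid of the vertices of the other
simplices off the section `μ`. -/
def shiftedRelations (b₀ : B) (μ : ∀ b, V b) : ((Σ b, V b) → ℝ) →ₗ[ℝ] B → ℝ :=
  LinearMap.pi fun b => ∑ i, LinearMap.proj ⟨b, i⟩ + if b = b₀ then
    (Fintype.card (V b₀) / restDim V b₀) • ∑ b' ∈ {b₀}ᶜ, LinearMap.proj ⟨b', μ b'⟩ else 0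

theorem shiftedRelations_apply_self (t : (Σ b, V b) → ℝ) : shiftedRelations b₀ μ t b₀ =
    ∑ i, t ⟨b₀, i⟩ + Fintype.card (V b₀) / restDim V b₀ * ∑ b ∈ {b₀}ᶜ, t ⟨b, μ b⟩ := by
  simp [shiftedRelations]

theorem shiftedRelations_apply_of_ne {b : B} (hb : b ≠ b₀) (t : (Σ b, V b) → ℝ) :
    shiftedRelations b₀ μ t b = ∑ i, t ⟨b, i⟩ := by
  simp [shiftedRelations, hb]

theorem eq_zero_of_shiftedRelations_eq_zero {t : (Σ b, V b) → ℝ} (ht : shiftedRelations b₀ μ t = 0)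
    (hz : ∀ l : Σ b, V b, l.2 ≠ z l.1 → t l = 0) : t = 0 := by
  have hsum (b : B) : ∑ i, t ⟨b, i⟩ = t ⟨b, z b⟩ := Fintype.sum_eq_single _ fun i hi => hz ⟨b, i⟩ hi
  have hne (b : B) (hb : b ≠ b₀) : t ⟨b, z b⟩ = 0 := by
    rw [← hsum, ← shiftedRelations_apply_of_ne hb, ht, Pi.zero_apply]
  have hμ (b : B) (hb : b ∈ ({b₀}ᶜ : Finset B)) : t ⟨b, μ b⟩ = 0 := by
    by_cases h : μ b = z b
    · rw [h, hne b (by simpa using hb)]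
    · exact hz _ h
  have hself : t ⟨b₀, z b₀⟩ = 0 := by
    have := congrFun ht b₀
    rwa [shiftedRelations_apply_self, hsum, Finset.sum_eq_zero hμ, mul_zero, add_zero] at this
  funext l
  obtain ⟨b, i⟩ := l
  by_cases h : i = z b
  · obtain rfl | hb := eq_or_ne b b₀
    · rw [h, hself, Pi.zero_apply]
    · rw [h, hne b hb, Pi.zero_apply]
  · exact hz _ h

/-- Rescales the block at `b₀` of a function with the block sums of `1` such that
`shiftedRelations b₀ μ` takes the same value as at `1`. The scaling factor vanishes exactly when the
function is concentrated on the section `μ` outside of `b₀`. -/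
def rescale (b₀ : B) (μ : ∀ b, V b) (u : (Σ b, V b) → ℝ) (l : Σ b, V b) : ℝ :=
  if l.1 = b₀ then
    (∑ b ∈ {b₀}ᶜ, (Fintype.card (V b) - u ⟨b, μ b⟩)) / restDim V b₀ * u l
  else u l

theorem rescale_sectionWeight_eq_zero_iff [∀ b, DecidableEq (V b)] {l : Σ b, V b} :
    rescale b₀ μ (sectionWeight μ) l = 0 ↔ l.1 = b₀ ∨ l.2 ≠ μ l.1 := by
  by_cases h : l.1 = b₀
  · simp [rescale, h, sectionWeight]
  · simp [rescale, h, sectionWeight_eq_zero_iff]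

variable [∀ b, Nontrivial (V b)]

theorem shiftedRelations_surjective (b₀ : B) (μ : ∀ b, V b) :
    Function.Surjective (shiftedRelations b₀ μ) := by
  classical
  choose ν hν using fun b => exists_ne (μ b)
  intro v
  refine ⟨fun l => if l.2 = ν l.1 then v l.1 else 0, funext fun b => ?_⟩
  obtain rfl | hb := eq_or_ne b b₀
  · simp [shiftedRelations_apply_self, (hν _).symm]
  · simp [shiftedRelations_apply_of_ne hb]

theorem finrank_ker_shiftedRelations (b₀ : B) (μ : ∀ b, V b) :
    Module.finrank ℝ (LinearMap.ker (shiftedRelations b₀ μ)) + Fintype.card B =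
      ∑ b, Fintype.card (V b) := by
  have := LinearMap.finrank_range_add_finrank_ker (shiftedRelations b₀ μ)
  rw [LinearMap.range_eq_top.2 (shiftedRelations_surjective b₀ μ), finrank_top] at this
  simpa [add_comm] using this

variable [Nontrivial B]

theorem restDim_pos (V : B → Type*) [∀ b, Fintype (V b)] [∀ b, Nontrivial (V b)] (b₀ : B) :
    0 < restDim V b₀ := by
  obtain ⟨b, hb⟩ := exists_ne b₀
  exact Finset.sum_pos (fun b _ => sub_pos.2 (Nat.one_lt_cast.2 Fintype.one_lt_card))
    ⟨b, by simpa using hb⟩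

theorem shiftedRelations_rescale (hsum : HasBlockSums u) :
    shiftedRelations b₀ μ (rescale b₀ μ u) = shiftedRelations b₀ μ 1 := by
  funext b
  obtain rfl | hb := eq_or_ne b b₀
  · have hμ : ∑ c ∈ {b}ᶜ, rescale b μ u ⟨c, μ c⟩ = ∑ c ∈ {b}ᶜ, u ⟨c, μ c⟩ :=
      Finset.sum_congr rfl fun c hc => if_neg (by simpa using hc)
    have hcard : ∑ c ∈ {b}ᶜ, (Fintype.card (V c) : ℝ) =
        restDim V b + ∑ c ∈ ({b}ᶜ : Finset B), 1 := by
      simp [restDim]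
    have hdim := (restDim_pos V b).ne'
    rw [shiftedRelations_apply_self, shiftedRelations_apply_self, hμ]
    simp only [rescale, if_true, ← Finset.mul_sum, hsum b, Pi.one_apply, Finset.sum_sub_distrib,
      hcard, Finset.sum_const, Finset.card_univ, nsmul_eq_mul, mul_one]
    field_simp
    ring
  · simp [shiftedRelations_apply_of_ne hb, rescale, hb, hsum b]

theorem rescale_nonneg (hsum : HasBlockSums u) (hu : 0 ≤ u) : 0 ≤ rescale b₀ μ u := by
  intro l
  unfold rescale
  split_ifs
  · refine mul_nonneg (div_nonneg (Finset.sum_nonneg fun b _ => ?_) (restDim_pos V b₀).le) (hu l)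
    exact sub_nonneg.2 (hsum.le_card hu b _)
  · exact hu l

theorem rescale_eq_zero_iff (hsum : HasBlockSums u) (hu : 0 ≤ u)
    (hne : ∃ b ≠ b₀, u ⟨b, μ b⟩ ≠ Fintype.card (V b)) {l : Σ b, V b} :
    rescale b₀ μ u l = 0 ↔ u l = 0 := by
  have hle (b : B) := hsum.le_card hu b (μ b)
  have hpos : 0 < ∑ b ∈ {b₀}ᶜ, (Fintype.card (V b) - u ⟨b, μ b⟩) := by
    obtain ⟨b, hb, hbu⟩ := hne
    refine Finset.sum_pos' (fun b _ => sub_nonneg.2 (hle b)) ⟨b, by simpa using hb, ?_⟩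
    exact sub_pos.2 ((hle b).lt_of_ne hbu)
  unfold rescale
  split_ifs
  · exact mul_eq_zero_iff_left (div_pos hpos (restDim_pos V b₀)).ne'
  · rfl

end ShiftedRelations

section ShiftedSum

variable {E B J : Type*} [NormedAddCommGroup E] [NormedSpace ℝ E] [Fintype B]
  {V : B → Type*} [∀ b, Fintype (V b)] {y : (Σ b, V b) → E} {b₀ : B} {μ z : ∀ b, V b}

/-- The vertices on the nonsimplicial facet of a shifted sum of simplices. -/
def shiftedFacet (b₀ : B) (μ : ∀ b, V b) : Set (Σ b, V b) :=
  {l | l.1 = b₀ ∨ l.2 ≠ μ l.1}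

theorem card_lt_ncard_shiftedFacet_add_card (b₀ : B) (μ : ∀ b, V b) :
    ∑ b, Fintype.card (V b) < (shiftedFacet b₀ μ).ncard + Fintype.card B := by
  have hsub : (shiftedFacet b₀ μ)ᶜ ⊆ (fun b => (⟨b, μ b⟩ : Σ b, V b)) '' {b₀}ᶜ := by
    rintro ⟨b, i⟩ h
    obtain ⟨hb, rfl⟩ : b ≠ b₀ ∧ i = μ b := by simpa [shiftedFacet] using h
    exact ⟨b, hb, rfl⟩
  have hcompl : (shiftedFacet b₀ μ)ᶜ.ncard < Fintype.card B := calc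
    _ ≤ ({b₀}ᶜ : Set B).ncard := (Set.ncard_le_ncard hsub).trans Set.ncard_image_le
    _ < Fintype.card B := by
      rw [← Nat.card_eq_fintype_card]
      exact Set.ncard_lt_card (by simp)
  have := Set.ncard_add_ncard_compl (shiftedFacet b₀ μ)
  rw [Nat.card_eq_fintype_card, Fintype.card_sigma] at this
  lia

variable [DecidableEq B]

/-- The points `y` are the vertices of a direct sum of simplices, indexed by `B`, of which the one
at `b₀` is shifted: its centroid is that of the vertices of the other simplices off the section
`μ`. -/
def IsShiftedSum (y : (Σ b, V b) → E) (b₀ : B) (μ : ∀ b, V b) : Prop :=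
  IsGaleDual y (shiftedRelations b₀ μ)

namespace IsShiftedSum

variable [∀ b, Nontrivial (V b)]

theorem exists_supports_rescale [Nontrivial B] {u : (Σ b, V b) → ℝ} (hy : IsShiftedSum y b₀ μ)
    (hsum : HasBlockSums u) (hu : 0 ≤ u) : ∃ f, Supports f y {l | rescale b₀ μ u l = 0} :=
  IsGaleDual.exists_supports hy (rescale_nonneg hsum hu) (shiftedRelations_rescale hsum)

theorem inConvexPosition (hy : IsShiftedSum y b₀ μ) (hB : 2 < Fintype.card B) :
    InConvexPosition y := by
  classical
  have : Nontrivial B := Fintype.one_lt_card_iff_nontrivial.1 (by lia)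
  intro l
  obtain ⟨b, hb⟩ : ∃ b, b ∉ ({b₀, l.1} : Finset B) := by
    by_contra! hall
    have := Finset.card_le_two (a := b₀) (b := l.1)
    rw [Finset.eq_univ_of_forall hall, Finset.card_univ] at this
    lia
  obtain ⟨hb₀, hbl⟩ : b ≠ b₀ ∧ b ≠ l.1 := by simpa using hb
  have hne : vertexWeight l ⟨b, μ b⟩ ≠ Fintype.card (V b) := by
    rw [vertexWeight_of_fst_ne hbl]
    exact_mod_cast Fintype.one_lt_card.ne
  obtain ⟨f, hf⟩ := hy.exists_supports_rescale (hasBlockSums_vertexWeight l) (vertexWeight_nonneg l)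
  simp only [rescale_eq_zero_iff (hasBlockSums_vertexWeight l) (vertexWeight_nonneg l)
    ⟨b, hb₀, hne⟩, vertexWeight_eq_zero_iff] at hf
  exact ⟨f, hf⟩

variable [FiniteDimensional ℝ E] [Nontrivial B]

theorem isFacetSet_shiftedFacet (hy : IsShiftedSum y b₀ μ) : IsFacetSet y (shiftedFacet b₀ μ) := by
  classical
  obtain ⟨f, hf⟩ := hy.exists_supports_rescale (hasBlockSums_sectionWeight μ)
    (sectionWeight_nonneg μ)
  simp only [rescale_sectionWeight_eq_zero_iff] at hf
  exact ⟨⟨f, hf⟩, IsGaleDual.span_image_eq_top hy fun t ht hz =>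
    eq_zero_of_shiftedRelations_eq_zero ht fun l hl => hz l (.inr hl)⟩

variable [∀ b, DecidableEq (V b)]

theorem isFacetSet_offSection (hy : IsShiftedSum y b₀ μ) (hz : ∃ b ≠ b₀, z b ≠ μ b) :
    IsFacetSet y (offSection z) := by
  have hne : ∃ b ≠ b₀, sectionWeight z ⟨b, μ b⟩ ≠ Fintype.card (V b) :=
    hz.imp fun b => And.imp_right fun h => by
      rw [sectionWeight_eq_zero_iff.2 h.symm]
      exact_mod_cast Fintype.card_ne_zero.symm
  obtain ⟨f, hf⟩ := hy.exists_supports_rescale (hasBlockSums_sectionWeight z)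
    (sectionWeight_nonneg z)
  simp only [rescale_eq_zero_iff (hasBlockSums_sectionWeight z) (sectionWeight_nonneg z) hne,
    sectionWeight_eq_zero_iff, ← mem_offSection] at hf
  exact ⟨⟨f, hf⟩, IsGaleDual.span_image_eq_top hy fun t ht hz =>
    eq_zero_of_shiftedRelations_eq_zero ht fun l hl => hz l (mem_offSection.2 hl)⟩

theorem isStackingFamily_offSection {z : J → ∀ b, V b} (hy : IsShiftedSum y b₀ μ)
    (hinj : Function.Injective z) (hsurj : ∀ b, Function.Surjective fun j => z j b)
    (hz : ∀ j, ∃ b ≠ b₀, z j b ≠ μ b) : IsStackingFamily y fun j => offSection (z j) where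
  isFacetSet j := hy.isFacetSet_offSection (hz j)
  nontrivial j := offSection_nontrivial (z j)
  not_subset _ _ hij h := hij (hinj (offSection_subset_iff.1 h))
  exists_facet_notMem l := (hsurj l.1 l.2).imp fun j hj => by simp [mem_offSection, hj]
  exists_vertex_notMem j := ⟨⟨b₀, z j b₀⟩, by simp [mem_offSection]⟩

end IsShiftedSum

end ShiftedSum

theorem exists_isShiftedSum {d : ℕ} {B : Type*} [Fintype B] [DecidableEq B] {V : B → Type*}
    [∀ b, Fintype (V b)] [∀ b, Nontrivial (V b)]
    (hV : ∑ b, Fintype.card (V b) = d + Fintype.card B) (b₀ : B) (μ : ∀ b, V b) :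
    ∃ y : (Σ b, V b) → Euc d, IsShiftedSum y b₀ μ := by
  have := finrank_ker_shiftedRelations b₀ μ
  exact exists_isGaleDual (by rw [finrank_euclideanSpace_fin]; lia)

theorem exists_illuminated_of_sections {d : ℕ} {B J : Type*} [Fintype B] [Fintype J]
    {V : B → Type*} [∀ b, Fintype (V b)] [∀ b, Nontrivial (V b)] (hB : 2 < Fintype.card B)
    (hV : ∑ b, Fintype.card (V b) = d + Fintype.card B) (b₀ : B) (μ : ∀ b, V b)
    {z : J → ∀ b, V b} (hinj : Function.Injective z)
    (hsurj : ∀ b, Function.Surjective fun j => z j b) (hz : ∀ j, ∃ b ≠ b₀, z j b ≠ μ b) :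
    ∃ P : Set (Euc d), IsDPolytope P ∧ Illuminated P ∧
      (verts P).ncard = d + Fintype.card B + Fintype.card J ∧
      ∃ F, IsFacetOf P F ∧ d < (Set.extremePoints ℝ F).ncard := by
  classical
  have : Nontrivial B := Fintype.one_lt_card_iff_nontrivial.1 (by lia)
  obtain ⟨y, hy⟩ := exists_isShiftedSum hV b₀ μ
  have hG (j : J) : ¬ ↑(offSection (z j)) ⊆ shiftedFacet b₀ μ := fun h => by
    obtain ⟨b, hb, hbz⟩ := hz j
    exact (h (mem_offSection.2 hbz.symm : (⟨b, μ b⟩ : Σ b, V b) ∈ _)).elim hb fun h => h rfl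
  obtain ⟨v, hv, hfacet, hill⟩ := (hy.isStackingFamily_offSection hinj hsurj hz).exists_stack
    (hy.inConvexPosition hB) hy.isFacetSet_shiftedFacet hG
  have hverts : verts (convexHull ℝ (Set.range v)) = Set.range v := hv.extremePoints_convexHull
  have hne : (shiftedFacet b₀ μ).Nonempty := ⟨⟨b₀, μ b₀⟩, .inl rfl⟩
  obtain ⟨F, hF, hcard⟩ := hfacet.exists_isFacetOf hv (hne.image _)
  refine ⟨convexHull ℝ (Set.range v), ⟨⟨_, Set.finite_range v, rfl⟩, hill.affineSpan_eq_top ?_⟩,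
    hill, ?_, F, hF, lt_of_lt_of_le ?_ hcard⟩
  · exact ⟨_, hverts.superset ⟨Sum.inl ⟨b₀, μ b₀⟩, rfl⟩⟩
  · rw [hverts, Set.ncard_range_of_injective hv.injective]
    simp [hV]
  · have := card_lt_ncard_shiftedFacet_add_card b₀ μ
    rw [Set.ncard_image_of_injective _ Sum.inl_injective]
    lia

section Parameters

variable {d n : ℕ}

theorem pf_le_iff : pf d ≤ n ↔ d ≤ n * (n + 1) := by
  rw [pf, Nat.ceil_le, div_le_iff₀ two_pos, sub_le_iff_le_add, Real.sqrt_le_left (by positivity),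
    ← Nat.cast_le (α := ℝ)]
  push_cast
  constructor <;> intro h <;> linarith

theorem lt_pf_iff : n < pf d ↔ n * (n + 1) < d := by
  rw [← not_le, pf_le_iff, not_le]

theorem ceil_div_le_iff {p : ℕ} (hp : 0 < p) : ⌈(d : ℝ) / p⌉₊ ≤ n ↔ d ≤ p * n := by
  rw [Nat.ceil_le, div_le_iff₀' (Nat.cast_pos.2 hp), ← Nat.cast_mul, Nat.cast_le]

theorem mul_ceil_div_lt {p : ℕ} (hp : 0 < p) : p * ⌈(d : ℝ) / p⌉₊ < d + p := by
  have := Nat.ceil_lt_add_one (a := (d : ℝ) / p) (by positivity)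
  rw [← sub_lt_iff_lt_add, lt_div_iff₀' (Nat.cast_pos.2 hp)] at this
  exact_mod_cast (by linarith : (p * ⌈(d : ℝ) / p⌉₊ : ℝ) < d + p)

theorem add_ceil_div_lt {p : ℕ} (hp : 2 < p) (hd : 6 < d) (hlt : (p - 1) * p < d)
    (hle : d ≤ p * (p + 1)) : p + ⌈(d : ℝ) / p⌉₊ < d := by
  have hq : ⌈(d : ℝ) / p⌉₊ ≤ p + 1 := (ceil_div_le_iff (by lia)).2 hle
  obtain rfl | hp : p = 3 ∨ 3 < p := by lia
  · have := mul_ceil_div_lt (d := d) three_pos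
    lia
  · have : 3 * p ≤ (p - 1) * p := Nat.mul_le_mul_right p (by lia)
    lia

/-- The construction needs `2 < p`. For `6 ≤ d`, only `d = 6` has `p(d) = 2`, and there `p = 3`,
`q = 2` give the same sum as `p(6) = 2`, `⌈6 / 2⌉ = 3`. -/
theorem exists_Mf_eq (hd : 6 ≤ d) :
    ∃ p q, 2 < p ∧ p ≤ d ∧ d ≤ p * q ∧ p * q < d + p ∧ Mf d = d + p + (q + 1) := by
  obtain rfl | hd : d = 6 ∨ 6 < d := by lia
  · have hpf : pf 6 = 2 := le_antisymm (pf_le_iff.2 (by simp)) (lt_pf_iff.2 (by simp))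
    exact ⟨3, 2, by norm_num [Mf, hpf]⟩
  · have hp : 2 < pf d := lt_pf_iff.2 hd
    have hlt : (pf d - 1) * pf d < d := by
      have := lt_pf_iff.1 (Nat.sub_one_lt_of_lt hp)
      rwa [Nat.sub_add_cancel (by lia)] at this
    have hsum := add_ceil_div_lt hp hd hlt (pf_le_iff.1 le_rfl)
    refine ⟨pf d, ⌈(d : ℝ) / pf d⌉₊, hp, by lia, (ceil_div_le_iff (by lia)).1 le_rfl,
      mul_ceil_div_lt (by lia), ?_⟩
    rw [Mf, min_eq_right (by lia)]
    ring

theorem exists_le_le_sum_eq {B : Type*} [Fintype B] {l u : B → ℕ} (hlu : l ≤ u)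
    (hl : ∑ b, l b ≤ n) (hu : n ≤ ∑ b, u b) : ∃ k, l ≤ k ∧ k ≤ u ∧ ∑ b, k b = n := by
  classical
  induction n, hl using Nat.le_induction with
  | base => exact ⟨l, le_rfl, hlu, rfl⟩
  | succ n _ ih =>
    obtain ⟨k, hlk, hku, hk⟩ := ih (by lia)
    obtain ⟨c, -, hc⟩ := Finset.exists_lt_of_sum_lt (hk.trans_lt hu)
    refine ⟨k + Pi.single c 1, hlk.trans (by simp), fun b => ?_, by
      simp [Finset.sum_add_distrib, hk]⟩
    obtain rfl | hb := eq_or_ne b c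
    · simpa using hc
    · simpa [hb] using hku b

end Parameters

section Clamp

variable {q : ℕ}

theorem injective_clamp {k : ℕ} (h : q ≤ k) :
    Function.Injective fun j : Fin (q + 1) => Fin.clamp j k := fun i j hij => by
  have := congrArg Fin.val hij
  simp only [Fin.coe_clamp] at this
  lia

theorem surjective_clamp {k : ℕ} (h : k ≤ q) :
    Function.Surjective fun j : Fin (q + 1) => Fin.clamp j k := fun i =>
  ⟨⟨i, by lia⟩, by ext; simpa using i.is_le⟩

theorem clamp_ne_zero_or_ne_last {j k k' : ℕ} (hk : 0 < k) (hk' : 0 < k') :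
    Fin.clamp j k ≠ 0 ∨ Fin.clamp j k' ≠ Fin.last k' := by
  simp only [ne_eq, Fin.ext_iff, Fin.coe_clamp, Fin.val_zero, Fin.val_last]
  lia

end Clamp

theorem exists_illuminated_of_mul_lt {d p q : ℕ} (hp : 2 < p) (hpd : p ≤ d) (hdpq : d ≤ p * q)
    (hpqd : p * q < d + p) :
    ∃ P : Set (Euc d), IsDPolytope P ∧ Illuminated P ∧ (verts P).ncard = d + p + (q + 1) ∧
      ∃ F, IsFacetOf P F ∧ d < (Set.extremePoints ℝ F).ncard := by
  have hq : 1 ≤ q := Nat.pos_of_ne_zero fun hq => by simp_all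
  obtain ⟨k, hk, hkq, hsum⟩ : ∃ k, 1 ≤ k ∧ k ≤ (fun _ : Fin p => q) ∧ ∑ b, k b = d :=
    exists_le_le_sum_eq (fun _ => hq) (by simpa using hpd) (by simpa using hdpq)
  obtain ⟨c, -, hc⟩ : ∃ c ∈ Finset.univ, q < k c + 1 :=
    Finset.exists_lt_of_sum_lt (by simpa [Finset.sum_add_distrib, hsum] using hpqd)
  have (b : Fin p) : Nontrivial (Fin (k b + 1)) := Fin.nontrivial_iff_two_le.2 (by simpa using hk b)
  let b₀ : Fin p := ⟨0, by lia⟩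
  let b₁ : Fin p := ⟨1, by lia⟩
  let b₂ : Fin p := ⟨2, by lia⟩
  have hb : b₂ ≠ b₁ := by simp [b₁, b₂]
  let z (j : Fin (q + 1)) (b : Fin p) : Fin (k b + 1) := Fin.clamp j (k b)
  let μ : ∀ b, Fin (k b + 1) := Function.update (fun b => Fin.last (k b)) b₁ 0
  have hzμ (j : Fin (q + 1)) : ∃ b ≠ b₀, z j b ≠ μ b := by
    obtain h | h := clamp_ne_zero_or_ne_last (j := j) (hk b₁) (hk b₂)
    · exact ⟨b₁, by simp [b₀, b₁], by simpa [μ] using h⟩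
    · exact ⟨b₂, by simp [b₀, b₂], by simpa [μ, hb] using h⟩
  obtain ⟨P, hP, hill, hcard, hF⟩ := exists_illuminated_of_sections (d := d) (z := z)
    (by simpa using hp) (by simp [Finset.sum_add_distrib, hsum]) b₀ μ
    (fun i j h => injective_clamp (Nat.lt_succ_iff.1 hc) (congrFun h c))
    (fun b => surjective_clamp (hkq b)) hzμ
  exact ⟨P, hP, hill, by simpa using hcard, hF⟩

/-- For every `d ≥ 6` there is a nonsimplicial Mani `d`-polytope:
an illuminated `d`-polytope with exactly `M(d)` vertices having a facet with more
than `d` vertices. -/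
theorem exists_nonsimplicial_mani {d : ℕ} (hd : 6 ≤ d) :
    ∃ P : Set (Euc d), IsManiPolytope P ∧
      ∃ F : Set (Euc d), IsFacetOf P F ∧ d < (Set.extremePoints ℝ F).ncard := by
  obtain ⟨p, q, hp, hpd, hdpq, hpqd, hM⟩ := exists_Mf_eq hd
  obtain ⟨P, hP, hill, hcard, hF⟩ := exists_illuminated_of_mul_lt hp hpd hdpq hpqd
  exact ⟨P, ⟨hP, hill, hcard.trans hM.symm⟩, hF⟩
end
end
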